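/- Let Ω = ℝⁿ × (0,∞) with n ≥ 2, H = L²(Ω, z dμ), and let the energy form be b(φ,η) = ∫_Ω ( z ∂_z φ ∂_z η̄ + z^{-1/n} ∇_x φ · ∇_x η̄ ) dμ, with energy space E = {φ ∈ H¹_loc(Ω) ∩ H : b(φ,φ) < ∞} normed by ‖φ‖_E² = b(φ,φ) + ‖φ‖_H². Then C_0^∞(Ω) (smooth functions compactly supported in the open set Ω) is dense in E. -/

import Mathlib

open MeasureTheory
open scoped BigOperators

/-- `G` is a weak (distributional) differential of `φ` on the half-space
`Ω = ℝⁿ × (0,∞)`: `φ` and all directional components of `G` are locally integrable on `Ω`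
and integration by parts against test functions supported in `Ω` holds in every direction.
This encodes `φ ∈ H¹_loc(Ω)` with weak differential `G`. -/
def IsWeakFDerivOn (n : ℕ) (φ : EuclideanSpace ℝ (Fin n) × ℝ → ℝ)
    (G : EuclideanSpace ℝ (Fin n) × ℝ → EuclideanSpace ℝ (Fin n) × ℝ → ℝ) : Prop :=
  LocallyIntegrableOn φ {p | 0 < p.2} ∧
  (∀ v : EuclideanSpace ℝ (Fin n) × ℝ,
    LocallyIntegrableOn (fun p => G p v) {p | 0 < p.2}) ∧
  ∀ ψ : EuclideanSpace ℝ (Fin n) × ℝ → ℝ, ContDiff ℝ (⊤ : ℕ∞) ψ → HasCompactSupport ψ →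
    tsupport ψ ⊆ {p | 0 < p.2} → ∀ v : EuclideanSpace ℝ (Fin n) × ℝ,
    ∫ p in {p : EuclideanSpace ℝ (Fin n) × ℝ | 0 < p.2}, φ p * fderiv ℝ ψ p v
      = - ∫ p in {p : EuclideanSpace ℝ (Fin n) × ℝ | 0 < p.2}, G p v * ψ p

/-- The energy density `z |∂_z φ|² + z^(-1/n) |∇ₓ φ|²` of the form `b`, evaluated on a
(weak) differential `G` of `φ`. -/
noncomputable def energyDensity (n : ℕ)
    (G : EuclideanSpace ℝ (Fin n) × ℝ → EuclideanSpace ℝ (Fin n) × ℝ → ℝ)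
    (p : EuclideanSpace ℝ (Fin n) × ℝ) : ℝ :=
  p.2 * (G p (0, 1)) ^ 2 +
    p.2 ^ (-(1 : ℝ) / n) * ∑ i : Fin n, (G p (EuclideanSpace.single i 1, 0)) ^ 2

open Filter Topology Set
open scoped Convolution ENNReal

/-!
The logarithmic cutoff `S (2 - L(z) / k)`, with `S` a smooth step and `L(z) = z - log z`, has energy
density `z (∂_z χ)² ≲ 1 / (z L²) + z` uniformly in `k`. The degenerate normal part of the energy
controls the first weight through the Hardy inequality
`∫ φ² / (z L²) ≲ ∫ z φ² + ∫ z (∂_z φ)²`, obtained by testing the weak derivative `2 φ ∂_z φ` of `φ²`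
against `χ² / L`, where `∂_z (1 / L)` produces `1 / (z L²)`. Tangentially, `χ` is spread out over a
radius `R` so large that the tangential weight `w` is at most `R² z` on the support of the
logarithmic cutoff. Dominated convergence then gives `χ φ → φ` in energy, and `χ φ`, supported in a
compact subset of the half-space where all weights are bounded, is approximated by mollification.
-/

section Localization

variable {X : Type*} [TopologicalSpace X] [MeasurableSpace X] {μ : Measure X} {Ω : Set X}
  {g χ : X → ℝ}

theorem setIntegral_mul_eq_integral_of_tsupport_subset (c : X → ℝ) (hχΩ : tsupport χ ⊆ Ω) :
    ∫ x in Ω, c x * χ x ∂μ = ∫ x, c x * χ x ∂μ :=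
  setIntegral_eq_integral_of_forall_compl_eq_zero fun x hx => by
    rw [image_eq_zero_of_notMem_tsupport fun hx' => hx (hχΩ hx'), mul_zero]

theorem memLp_two_restrict_of_isCompact {K : Set X} (hg : LocallyIntegrableOn g Ω μ)
    (hg_sq : LocallyIntegrableOn (fun x => g x ^ 2) Ω μ) (hK : IsCompact K) (hKΩ : K ⊆ Ω) :
    MemLp g 2 (μ.restrict K) :=
  (memLp_two_iff_integrable_sq (hg.integrableOn_compact_subset hKΩ hK).1).2
    (hg_sq.integrableOn_compact_subset hKΩ hK)

theorem locallyIntegrableOn_mul [LocallyCompactSpace X] {u : X → ℝ} (hΩ : IsOpen Ω)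
    (hu : LocallyIntegrableOn u Ω μ) (hg : LocallyIntegrableOn g Ω μ)
    (hu_sq : LocallyIntegrableOn (fun x => u x ^ 2) Ω μ)
    (hg_sq : LocallyIntegrableOn (fun x => g x ^ 2) Ω μ) :
    LocallyIntegrableOn (fun x => u x * g x) Ω μ :=
  (locallyIntegrableOn_iff hΩ.isLocallyClosed).2 fun _ hKΩ hK =>
    (memLp_two_restrict_of_isCompact hu hu_sq hK hKΩ).integrable_mul
      (memLp_two_restrict_of_isCompact hg hg_sq hK hKΩ)

variable [T2Space X] [OpensMeasurableSpace X]

theorem integrable_mul_of_tsupport_subset (hg : LocallyIntegrableOn g Ω μ) (hχ : Continuous χ)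
    (hχ_supp : HasCompactSupport χ) (hχΩ : tsupport χ ⊆ Ω) :
    Integrable (fun x => χ x * g x) μ := by
  refine (integrableOn_iff_integrable_of_support_subset (s := tsupport χ) ?_).1
    ((hg.integrableOn_compact_subset hχΩ hχ_supp).continuousOn_mul hχ.continuousOn hχ_supp)
  exact (Function.support_mul_subset_left _ _).trans (subset_tsupport χ)

theorem memLp_two_mul_of_tsupport_subset (hg : LocallyIntegrableOn g Ω μ)
    (hg_sq : LocallyIntegrableOn (fun x => g x ^ 2) Ω μ) (hχ : Continuous χ)
    (hχ_supp : HasCompactSupport χ) (hχΩ : tsupport χ ⊆ Ω) :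
    MemLp (fun x => χ x * g x) 2 μ := by
  refine (memLp_two_iff_integrable_sq
    (integrable_mul_of_tsupport_subset hg hχ hχ_supp hχΩ).1).2 ?_
  have hsub : tsupport (fun x => χ x * χ x) ⊆ tsupport χ := tsupport_mul_subset_left
  refine (integrable_mul_of_tsupport_subset hg_sq (hχ.mul hχ) hχ_supp.mul_right
    (hsub.trans hχΩ)).congr (.of_forall fun x => ?_)
  simp only [Pi.mul_apply]
  ring

theorem locallyIntegrableOn_of_mul [LocallyCompactSpace X] {c f : X → ℝ} (hΩ : IsOpen Ω)
    (hc : ContinuousOn c Ω) (hc₀ : ∀ x ∈ Ω, c x ≠ 0)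
    (h : LocallyIntegrableOn (fun x => c x * f x) Ω μ) : LocallyIntegrableOn f Ω μ := by
  refine (locallyIntegrableOn_iff hΩ.isLocallyClosed).2 fun K hKΩ hK => ?_
  refine ((h.integrableOn_compact_subset hKΩ hK).continuousOn_mul
    ((hc.inv₀ hc₀).mono hKΩ) hK).congr_fun (fun x hx => ?_) hK.measurableSet
  exact inv_mul_cancel_left₀ (hc₀ x (hKΩ hx)) (f x)

end Localization

theorem contDiff_mul_of_tsupport_subset {V : Type*} [NormedAddCommGroup V] [NormedSpace ℝ V]
    {Ω : Set V} {χ h : V → ℝ} {m : WithTop ℕ∞} (hχ : ContDiff ℝ m χ) (hh : ContDiffOn ℝ m h Ω)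
    (hΩ : IsOpen Ω) (hχΩ : tsupport χ ⊆ Ω) : ContDiff ℝ m fun x => χ x * h x := by
  refine contDiff_iff_contDiffAt.2 fun x => ?_
  by_cases hx : x ∈ tsupport χ
  · exact hχ.contDiffAt.mul (hh.contDiffAt (hΩ.mem_nhds (hχΩ hx)))
  · refine contDiffAt_const (c := 0) |>.congr_of_eventuallyEq ?_
    filter_upwards [notMem_tsupport_iff_eventuallyEq.1 hx] with y hy
    rw [hy, Pi.zero_apply, zero_mul]

section Mollification

variable {V F : Type*} [NormedAddCommGroup V] [NormedSpace ℝ V] [FiniteDimensional ℝ V]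
  [MeasurableSpace V] [BorelSpace V] {μ : Measure V}
  [NormedAddCommGroup F] [NormedSpace ℝ F]

/-- The mollification of `v` by the bump function `f`, normalised to have integral one. -/
noncomputable abbrev mollify (μ : Measure V) (f : ContDiffBump (0 : V)) (v : V → F) : V → F :=
  f.normed μ ⋆[ContinuousLinearMap.lsmul ℝ ℝ, μ] v

theorem mollify_eq_integral_withDensity (f : ContDiffBump (0 : V)) (v : V → F) (x : V) :
    mollify μ f v x
      = ∫ t, v (x - t) ∂μ.withDensity fun t => ENNReal.ofReal (f.normed μ t) := by
  rw [integral_withDensity_eq_integral_toReal_smul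
    f.continuous_normed.measurable.ennreal_ofReal (by simp)]
  simp only [convolution, ContinuousLinearMap.lsmul_apply,
    ENNReal.toReal_ofReal (f.nonneg_normed _)]

variable [μ.IsAddHaarMeasure]

theorem isProbabilityMeasure_withDensity_normed (f : ContDiffBump (0 : V)) :
    IsProbabilityMeasure (μ.withDensity fun t => ENNReal.ofReal (f.normed μ t)) := by
  refine ⟨?_⟩
  rw [withDensity_apply _ .univ, setLIntegral_univ,
    ← ofReal_integral_eq_lintegral_ofReal f.integrable_normed (.of_forall f.nonneg_normed),
    f.integral_normed, ENNReal.ofReal_one]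

theorem enorm_mollify_rpow_le (f : ContDiffBump (0 : V)) {v : V → F}
    (hv : AEStronglyMeasurable v μ) {p : ℝ≥0∞} (hp : 1 ≤ p) (hp_top : p ≠ ∞) (x : V) :
    ‖mollify μ f v x‖ₑ ^ p.toReal
      ≤ ∫⁻ t, ‖v (x - t)‖ₑ ^ p.toReal ∂μ.withDensity fun t => ENNReal.ofReal (f.normed μ t) := by
  set ν := μ.withDensity fun t => ENNReal.ofReal (f.normed μ t)
  have : IsProbabilityMeasure ν := isProbabilityMeasure_withDensity_normed f
  have hp_pos : 0 < p.toReal := ENNReal.toReal_pos (by positivity) hp_top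
  have hmeas : AEStronglyMeasurable (fun t => v (x - t)) ν :=
    (hv.comp_measurePreserving (Measure.measurePreserving_sub_left μ x)).mono_ac
      (withDensity_absolutelyContinuous _ _)
  have hnorm : ‖mollify μ f v x‖ₑ
      ≤ eLpNorm (fun t => v (x - t)) p ν := by
    rw [mollify_eq_integral_withDensity]
    refine (enorm_integral_le_lintegral_enorm _).trans ?_
    rw [← eLpNorm_one_eq_lintegral_enorm]
    exact eLpNorm_le_eLpNorm_of_exponent_le hp hmeas
  rw [eLpNorm_eq_lintegral_rpow_enorm_toReal (by positivity) hp_top, one_div] at hnorm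
  exact (ENNReal.le_rpow_inv_iff hp_pos).1 hnorm

theorem eLpNorm_mollify_le (f : ContDiffBump (0 : V)) {v : V → F}
    (hv : AEStronglyMeasurable v μ) {p : ℝ≥0∞} (hp : 1 ≤ p) (hp_top : p ≠ ∞) :
    eLpNorm (mollify μ f v) p μ ≤ eLpNorm v p μ := by
  set ν := μ.withDensity fun t => ENNReal.ofReal (f.normed μ t)
  have : IsProbabilityMeasure ν := isProbabilityMeasure_withDensity_normed f
  have hmeas : AEMeasurable (fun z : V × V => ‖v (z.1 - z.2)‖ₑ ^ p.toReal) (μ.prod ν) :=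
    ((hv.comp_quasiMeasurePreserving (quasiMeasurePreserving_sub_of_right_invariant μ ν)).enorm
      ).pow_const _
  rw [eLpNorm_eq_lintegral_rpow_enorm_toReal (by positivity) hp_top,
    eLpNorm_eq_lintegral_rpow_enorm_toReal (by positivity) hp_top]
  gcongr ?_ ^ _
  calc ∫⁻ x, ‖mollify μ f v x‖ₑ ^ p.toReal ∂μ
      ≤ ∫⁻ x, ∫⁻ t, ‖v (x - t)‖ₑ ^ p.toReal ∂ν ∂μ :=
        lintegral_mono (enorm_mollify_rpow_le f hv hp hp_top)
    _ = ∫⁻ t, ∫⁻ x, ‖v (x - t)‖ₑ ^ p.toReal ∂μ ∂ν := lintegral_lintegral_swap hmeas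
    _ = ∫⁻ x, ‖v x‖ₑ ^ p.toReal ∂μ := by
      simp only [fun t => lintegral_sub_right_eq_self (μ := μ) (fun x => ‖v x‖ₑ ^ p.toReal) t,
        lintegral_const, measure_univ, mul_one]

theorem tsupport_mollify_subset (f : ContDiffBump (0 : V)) {v : V → F} :
    tsupport (mollify μ f v) ⊆ Metric.cthickening f.rOut (tsupport v) := by
  refine closure_minimal ((support_convolution_subset _).trans ?_) Metric.isClosed_cthickening
  rintro _ ⟨t, ht, y, hy, rfl⟩
  rw [f.support_normed_eq, mem_ball_zero_iff] at ht
  exact Metric.mem_cthickening_of_dist_le _ y _ _ (subset_tsupport v hy)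
    (by simpa [dist_eq_norm] using ht.le)

theorem contDiff_mollify (f : ContDiffBump (0 : V)) {v : V → F}
    (hv : LocallyIntegrable v μ) : ContDiff ℝ (⊤ : ℕ∞) (mollify μ f v) :=
  f.hasCompactSupport_normed.contDiff_convolution_left _ f.contDiff_normed hv

theorem eLpNorm_mollify_sub_le [CompleteSpace F] (f : ContDiffBump (0 : V))
    {g : V → F} (hg : Continuous g) {p : ℝ≥0∞} (hp_top : p ≠ ∞) {c : ℝ} (hc : 0 ≤ c)
    (hfg : ∀ x y, dist y x < f.rOut → dist (g y) (g x) ≤ c) :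
    eLpNorm (mollify μ f g - g) p μ
      ≤ ENNReal.ofReal c * μ (Metric.cthickening f.rOut (tsupport g)) ^ (1 / p.toReal) := by
  refine eLpNorm_sub_le_of_dist_bdd μ hp_top Metric.isClosed_cthickening.measurableSet hc
    (fun x => ContDiffBump.dist_normed_convolution_le hg.aestronglyMeasurable (hfg x)) ?_
    ((subset_tsupport g).trans (Metric.self_subset_cthickening _))
  exact (subset_tsupport _).trans (tsupport_mollify_subset f)

theorem tendsto_eLpNorm_mollify_sub_of_hasCompactSupport [CompleteSpace F]
    {ι : Type*} {l : Filter ι} {ρ : ι → ContDiffBump (0 : V)}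
    (hρ : Tendsto (fun i => (ρ i).rOut) l (𝓝 0)) {p : ℝ≥0∞} (hp_top : p ≠ ∞) {g : V → F}
    (hg : Continuous g) (hg_supp : HasCompactSupport g) :
    Tendsto (fun i => eLpNorm (mollify μ (ρ i) g - g) p μ) l (𝓝 0) := by
  set M := μ (Metric.cthickening 1 (tsupport g)) ^ (1 / p.toReal) with hM
  have hM_top : M ≠ ∞ := ENNReal.rpow_ne_top_of_nonneg (by positivity)
    hg_supp.isCompact.cthickening.measure_lt_top.ne
  have hlim : Tendsto (fun c : ℝ => ENNReal.ofReal c * M) (𝓝[>] 0) (𝓝 0) := by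
    have h : Tendsto (fun c : ℝ => ENNReal.ofReal c * M) (𝓝 0) (𝓝 (ENNReal.ofReal 0 * M)) :=
      ENNReal.Tendsto.mul_const (ENNReal.continuous_ofReal.tendsto 0) (.inr hM_top)
    simpa using h.mono_left nhdsWithin_le_nhds
  refine ENNReal.tendsto_nhds_zero.2 fun ε hε => ?_
  obtain ⟨c, hcε, hc⟩ :=
    ((ENNReal.tendsto_nhds_zero.1 hlim ε hε).and self_mem_nhdsWithin).exists
  obtain ⟨δ, hδ, hgδ⟩ :=
    Metric.uniformContinuous_iff.1 (hg_supp.uniformContinuous_of_continuous hg) c hc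
  filter_upwards [hρ.eventually_lt_const hδ, hρ.eventually_le_const one_pos] with i hiδ hi1
  refine (eLpNorm_mollify_sub_le (ρ i) hg hp_top (le_of_lt hc)
    fun x y hxy => (hgδ (hxy.trans hiδ)).le).trans (le_trans ?_ hcε)
  rw [hM]
  gcongr ENNReal.ofReal c * μ ?_ ^ _
  exact Metric.cthickening_mono hi1 _

theorem mollify_sub [CompleteSpace F] (f : ContDiffBump (0 : V)) {u v : V → F}
    (hu : LocallyIntegrable u μ) (hv : LocallyIntegrable v μ) :
    mollify μ f (u - v) = mollify μ f u - mollify μ f v := by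
  have hexists {w : V → F} (hw : LocallyIntegrable w μ) :=
    f.hasCompactSupport_normed.convolutionExists_left (ContinuousLinearMap.lsmul ℝ ℝ)
      (f.continuous_normed (μ := μ)) hw
  ext x
  rw [Pi.sub_apply]
  simp only [convolution, Pi.sub_apply, map_sub]
  exact integral_sub (hexists hu x) (hexists hv x)

theorem tendsto_eLpNorm_mollify_sub [CompleteSpace F]
    {ι : Type*} {l : Filter ι} {ρ : ι → ContDiffBump (0 : V)}
    (hρ : Tendsto (fun i => (ρ i).rOut) l (𝓝 0)) {p : ℝ≥0∞} (hp : 1 ≤ p) (hp_top : p ≠ ∞)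
    {u : V → F} (hu : MemLp u p μ) :
    Tendsto (fun i => eLpNorm (mollify μ (ρ i) u - u) p μ) l (𝓝 0) := by
  refine ENNReal.tendsto_nhds_zero.2 fun ε hε => ?_
  have hε3 : 0 < ε / 3 := ENNReal.div_pos hε.ne' (by simp)
  obtain ⟨g, hg_supp, hug, hg, hgp⟩ := hu.exists_hasCompactSupport_eLpNorm_sub_le hp_top hε3.ne'
  filter_upwards [ENNReal.tendsto_nhds_zero.1
    (tendsto_eLpNorm_mollify_sub_of_hasCompactSupport (μ := μ) hρ hp_top hg hg_supp) _ hε3]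
    with i hi
  set A : (V → F) → V → F := mollify μ (ρ i)
  have hA {v : V → F} (hv : LocallyIntegrable v μ) : AEStronglyMeasurable (A v) μ :=
    (contDiff_mollify (ρ i) hv).continuous.aestronglyMeasurable
  have hsplit : A u - u = A (u - g) + (A g - g) - (u - g) := by
    rw [show A (u - g) = A u - A g from mollify_sub (ρ i)
      (hu.locallyIntegrable hp) (hgp.locallyIntegrable hp)]
    abel
  have hug_meas := hu.1.sub hgp.1
  have hug_loc := (hu.sub hgp).locallyIntegrable hp
  have hAg_meas := (hA (hgp.locallyIntegrable hp)).sub hgp.1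
  change eLpNorm (A u - u) p μ ≤ ε
  calc eLpNorm (A u - u) p μ
      ≤ eLpNorm (A (u - g)) p μ + eLpNorm (A g - g) p μ + eLpNorm (u - g) p μ := by
        rw [hsplit]
        exact (eLpNorm_sub_le ((hA hug_loc).add hAg_meas) hug_meas hp).trans
          (by gcongr; exact eLpNorm_add_le (hA hug_loc) hAg_meas hp)
    _ ≤ ε / 3 + ε / 3 + ε / 3 := by
        gcongr
        exact (eLpNorm_mollify_le _ hug_meas hp hp_top).trans hug
    _ = ε := ENNReal.add_thirds ε

theorem memLp_mollify (f : ContDiffBump (0 : V)) {v : V → F} {p : ℝ≥0∞} (hp : 1 ≤ p)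
    (hp_top : p ≠ ∞) (hv : MemLp v p μ) : MemLp (mollify μ f v) p μ :=
  ⟨(contDiff_mollify f (hv.locallyIntegrable hp)).continuous.aestronglyMeasurable,
    (eLpNorm_mollify_le f hv.1 hp hp_top).trans_lt hv.2⟩

theorem exists_isCompact_eventually_tsupport_mollify_subset {ι : Type*} {l : Filter ι}
    {ρ : ι → ContDiffBump (0 : V)} (hρ : Tendsto (fun i => (ρ i).rOut) l (𝓝 0)) {K₀ Ω : Set V}
    (hK₀ : IsCompact K₀) (hΩ : IsOpen Ω) (hK₀Ω : K₀ ⊆ Ω) :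
    ∃ K, IsCompact K ∧ K₀ ⊆ K ∧ K ⊆ Ω ∧
      ∀ᶠ i in l, ∀ u : V → F, tsupport u ⊆ K₀ → tsupport (mollify μ (ρ i) u) ⊆ K := by
  obtain ⟨δ, hδ, hδΩ⟩ := hK₀.exists_cthickening_subset_open hΩ hK₀Ω
  refine ⟨_, hK₀.cthickening, Metric.self_subset_cthickening _, hδΩ, ?_⟩
  filter_upwards [hρ.eventually_le_const hδ] with i hi u hu
  exact (tsupport_mollify_subset (ρ i)).trans
    ((Metric.cthickening_subset_of_subset _ hu).trans (Metric.cthickening_mono hi _))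

end Mollification

theorem exists_contDiffBump_tendsto_rOut {V : Type*} [NormedAddCommGroup V] [NormedSpace ℝ V] :
    ∃ ρ : ℕ → ContDiffBump (0 : V), Tendsto (fun k => (ρ k).rOut) atTop (𝓝 0) := by
  refine ⟨fun k => ⟨1 / ((k : ℝ) + 1) / 2, 1 / ((k : ℝ) + 1), by positivity,
    half_lt_self (by positivity)⟩, tendsto_one_div_add_atTop_nhds_zero_nat⟩

theorem tendsto_integral_mul_of_tendsto_eLpNorm {α ι : Type*} [MeasurableSpace α] {ν : Measure α}
    {p q : ℝ≥0∞} [p.HolderConjugate q] {l : Filter ι} {f g : α → ℝ} {G : ι → α → ℝ}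
    (hf : MemLp f p ν) (hg : MemLp g q ν) (hG : ∀ i, MemLp (G i) q ν)
    (h : Tendsto (fun i => eLpNorm (G i - g) q ν) l (𝓝 0)) :
    Tendsto (fun i => ∫ x, f x * G i x ∂ν) l (𝓝 (∫ x, f x * g x ∂ν)) := by
  have hmul_int {w : α → ℝ} (hw : MemLp w q ν) : Integrable (fun x => f x * w x) ν :=
    memLp_one_iff_integrable.1 (hw.mul hf)
  refine tendsto_integral_of_L1' (F := fun i x => f x * G i x) _
    (hmul_int hg).1 (.of_forall fun i => hmul_int (hG i)) ?_
  have hbound (i : ι) : eLpNorm ((fun x => f x * G i x) - fun x => f x * g x) 1 ν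
      ≤ eLpNorm f p ν * eLpNorm (G i - g) q ν := by
    have heq : ((fun x => f x * G i x) - fun x => f x * g x) = f • (G i - g) := by
      ext x
      simp only [Pi.sub_apply, Pi.smul_apply', smul_eq_mul, mul_sub]
    rw [heq]
    exact eLpNorm_smul_le_mul_eLpNorm ((hG i).1.sub hg.1) hf.1
  refine tendsto_of_tendsto_of_tendsto_of_le_of_le tendsto_const_nhds ?_ (fun _ => zero_le) hbound
  simpa using ENNReal.Tendsto.const_mul h (.inr hf.2.ne)

section WeakDerivative

variable {V : Type*} [NormedAddCommGroup V] [NormedSpace ℝ V] [MeasurableSpace V]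
  {μ : Measure V} {Ω : Set V} {u g χ ψ : V → ℝ} {v : V}

/-- `g` is the weak derivative of `u` in the direction `v` on `Ω`: integration by parts holds
against all smooth test functions with compact support in `Ω`. -/
def HasWeakLineDerivOn (μ : Measure V) (Ω : Set V) (u g : V → ℝ) (v : V) : Prop :=
  ∀ ψ : V → ℝ, ContDiff ℝ (⊤ : ℕ∞) ψ → HasCompactSupport ψ → tsupport ψ ⊆ Ω →
    ∫ x in Ω, u x * fderiv ℝ ψ x v ∂μ = -∫ x in Ω, g x * ψ x ∂μ

theorem hasWeakLineDerivOn_iff_integral : HasWeakLineDerivOn μ Ω u g v ↔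
    ∀ ψ : V → ℝ, ContDiff ℝ (⊤ : ℕ∞) ψ → HasCompactSupport ψ → tsupport ψ ⊆ Ω →
      ∫ x, u x * fderiv ℝ ψ x v ∂μ = -∫ x, g x * ψ x ∂μ := by
  refine forall₄_congr fun ψ _ _ hψΩ => ?_
  rw [setIntegral_mul_eq_integral_of_tsupport_subset g hψΩ,
    setIntegral_mul_eq_integral_of_tsupport_subset u
      ((tsupport_fderiv_apply_subset ℝ v).trans hψΩ)]

variable [BorelSpace V]

theorem integrable_mul_fderiv_of_tsupport_subset (hu : LocallyIntegrableOn u Ω μ)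
    (hψ : ContDiff ℝ (⊤ : ℕ∞) ψ) (hψ_supp : HasCompactSupport ψ) (hψΩ : tsupport ψ ⊆ Ω) (v : V) :
    Integrable (fun x => u x * fderiv ℝ ψ x v) μ := by
  simp only [mul_comm (u _)]
  exact integrable_mul_of_tsupport_subset hu
    ((hψ.continuous_fderiv (by simp)).clm_apply continuous_const) (hψ_supp.fderiv_apply ℝ v)
    ((tsupport_fderiv_apply_subset ℝ v).trans hψΩ)

namespace HasWeakLineDerivOn

theorem integrable_add_and_setIntegral_add_eq_zero (h : HasWeakLineDerivOn μ Ω u g v)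
    (hu : LocallyIntegrableOn u Ω μ) (hg : LocallyIntegrableOn g Ω μ)
    (hψ : ContDiff ℝ (⊤ : ℕ∞) ψ) (hψ_supp : HasCompactSupport ψ) (hψΩ : tsupport ψ ⊆ Ω) :
    Integrable (fun x => u x * fderiv ℝ ψ x v + ψ x * g x) μ ∧
      ∫ x in Ω, (u x * fderiv ℝ ψ x v + ψ x * g x) ∂μ = 0 := by
  have hu' := integrable_mul_fderiv_of_tsupport_subset hu hψ hψ_supp hψΩ v
  have hg' := integrable_mul_of_tsupport_subset hg hψ.continuous hψ_supp hψΩ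
  refine ⟨hu'.add hg', ?_⟩
  rw [integral_add hu'.integrableOn hg'.integrableOn, h ψ hψ hψ_supp hψΩ]
  simp only [mul_comm, neg_add_cancel]

theorem mul_of_tsupport_subset (h : HasWeakLineDerivOn μ Ω u g v)
    (hu : LocallyIntegrableOn u Ω μ) (hg : LocallyIntegrableOn g Ω μ)
    (hχ : ContDiff ℝ (⊤ : ℕ∞) χ) (hχ_supp : HasCompactSupport χ) (hχΩ : tsupport χ ⊆ Ω) :
    HasWeakLineDerivOn μ univ (fun x => χ x * u x)
      (fun x => χ x * g x + fderiv ℝ χ x v * u x) v := by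
  refine hasWeakLineDerivOn_iff_integral.2 fun ψ hψ _ _ => ?_
  have hχψ_supp : HasCompactSupport fun x => χ x * ψ x := hχ_supp.mul_right
  have hsupp (c : V → ℝ) : tsupport (fun x => χ x * c x) ⊆ Ω :=
    tsupport_mul_subset_left.trans hχΩ
  have hprod (x : V) : fderiv ℝ (fun x => χ x * ψ x) x v
      = χ x * fderiv ℝ ψ x v + ψ x * fderiv ℝ χ x v := by
    rw [fderiv_fun_mul (hχ.differentiable (by simp) x) (hψ.differentiable (by simp) x)]
    simp
  have hu_int := integrable_mul_fderiv_of_tsupport_subset hu (hχ.mul hψ) hχψ_supp (hsupp ψ) v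
  have hg_int := integrable_mul_of_tsupport_subset hg (hχ.mul hψ).continuous hχψ_supp (hsupp ψ)
  have hχu_int : Integrable (fun x => χ x * fderiv ℝ ψ x v * u x) μ :=
    integrable_mul_of_tsupport_subset hu
      (hχ.continuous.mul ((hψ.continuous_fderiv (by simp)).clm_apply continuous_const))
      hχ_supp.mul_right (hsupp _)
  have htest := hasWeakLineDerivOn_iff_integral.1 h _ (hχ.mul hψ) hχψ_supp (hsupp ψ)
  have hleibniz (x : V) : (χ x * g x + fderiv ℝ χ x v * u x) * ψ x
      = u x * fderiv ℝ (fun x => χ x * ψ x) x v + χ x * ψ x * g x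
        - χ x * fderiv ℝ ψ x v * u x := by
    rw [hprod]
    ring
  simp only [hleibniz, mul_right_comm (χ _) (u _)]
  have hsum_int : Integrable
      (fun x => u x * fderiv ℝ (fun x => χ x * ψ x) x v + χ x * ψ x * g x) μ :=
    hu_int.add hg_int
  rw [integral_sub hsum_int hχu_int, integral_add hu_int hg_int, htest]
  simp only [mul_comm (g _)]
  ring

variable [FiniteDimensional ℝ V] [μ.IsAddHaarMeasure]

theorem fderiv_mollify (h : HasWeakLineDerivOn μ univ u g v)
    (hu : LocallyIntegrable u μ) (f : ContDiffBump (0 : V)) (x : V) :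
    fderiv ℝ (mollify μ f u) x v = mollify μ f g x := by
  set ρ := f.normed μ
  have hρ : ContDiff ℝ (⊤ : ℕ∞) ρ := f.contDiff_normed
  have hρ_supp : HasCompactSupport ρ := f.hasCompactSupport_normed
  have hρx : ContDiff ℝ (⊤ : ℕ∞) fun y => ρ (x - y) := hρ.comp (contDiff_const.sub contDiff_id)
  have hρx_supp : HasCompactSupport fun y => ρ (x - y) :=
    hρ_supp.comp_homeomorph (Homeomorph.subLeft x)
  have hρx_fderiv (y : V) : fderiv ℝ (fun y => ρ (x - y)) y v = -fderiv ℝ ρ (x - y) v := by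
    have hcomp := (hρ.differentiable (by simp) (x - y)).hasFDerivAt.comp y
      ((hasFDerivAt_id y).const_sub x)
    exact (DFunLike.congr_fun hcomp.fderiv v).trans (by simp)
  have htest := hasWeakLineDerivOn_iff_integral.1 h _ hρx hρx_supp (subset_univ _)
  simp only [hρx_fderiv, mul_neg, integral_neg, neg_inj] at htest
  have hexists := convolutionExistsAt_iff_integrable_swap.1
    ((hρ_supp.fderiv ℝ).convolutionExists_left
      ((ContinuousLinearMap.lsmul ℝ ℝ : ℝ →L[ℝ] ℝ →L[ℝ] ℝ).precompL V)
      (hρ.continuous_fderiv (by simp)) hu x)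
  rw [(hρ_supp.hasFDerivAt_convolution_left (ContinuousLinearMap.lsmul ℝ ℝ)
      (hρ.of_le (by exact_mod_cast le_top)) hu x).fderiv, convolution_eq_swap,
    ContinuousLinearMap.integral_apply hexists, mollify, convolution_eq_swap]
  simpa [ContinuousLinearMap.precompL_apply, mul_comm] using htest

theorem integral_mul_eq_neg_integral_mul {U H : V → ℝ} {K₀ : Set V}
    (h : HasWeakLineDerivOn μ Ω u g v)
    (hu : LocallyIntegrableOn u Ω μ) (hg : LocallyIntegrableOn g Ω μ)
    (hu_sq : LocallyIntegrableOn (fun x => u x ^ 2) Ω μ)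
    (hg_sq : LocallyIntegrableOn (fun x => g x ^ 2) Ω μ)
    (hUH : HasWeakLineDerivOn μ univ U H v) (hU : MemLp U 2 μ) (hH : MemLp H 2 μ)
    (hΩ : IsOpen Ω) (hK₀ : IsCompact K₀) (hK₀Ω : K₀ ⊆ Ω)
    (hU_supp : tsupport U ⊆ K₀) (hH_supp : tsupport H ⊆ K₀) :
    ∫ x, u x * H x ∂μ = -∫ x, g x * U x ∂μ := by
  obtain ⟨ρ, hρ⟩ := exists_contDiffBump_tendsto_rOut (V := V)
  obtain ⟨K, hK, hK₀K, hKΩ, hρK⟩ := exists_isCompact_eventually_tsupport_mollify_subset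
    (μ := μ) (F := ℝ) hρ hK₀ hΩ hK₀Ω
  have hlim {c w : V → ℝ} (hc : LocallyIntegrableOn c Ω μ)
      (hc_sq : LocallyIntegrableOn (fun x => c x ^ 2) Ω μ) (hw : MemLp w 2 μ)
      (hw_supp : tsupport w ⊆ K) :
      Tendsto (fun k => ∫ x in K, c x * mollify μ (ρ k) w x ∂μ) atTop
        (𝓝 (∫ x, c x * w x ∂μ)) := by
    rw [← setIntegral_mul_eq_integral_of_tsupport_subset c hw_supp]
    refine tendsto_integral_mul_of_tendsto_eLpNorm (p := 2) (q := 2)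
      (memLp_two_restrict_of_isCompact hc hc_sq hK hKΩ) (hw.restrict K)
      (fun k => (memLp_mollify (ρ k) (by norm_num) (by norm_num) hw).restrict K) ?_
    exact tendsto_of_tendsto_of_tendsto_of_le_of_le tendsto_const_nhds
      (tendsto_eLpNorm_mollify_sub hρ (by norm_num) (by norm_num) hw) (fun _ => zero_le)
      fun k => eLpNorm_mono_measure _ Measure.restrict_le_self
  refine tendsto_nhds_unique (hlim hu hu_sq hH (hH_supp.trans hK₀K))
    ((hlim hg hg_sq hU (hU_supp.trans hK₀K)).neg.congr' ?_)
  filter_upwards [hρK] with k hk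
  have hU_loc := hU.locallyIntegrable (by norm_num : (1 : ℝ≥0∞) ≤ 2)
  rw [setIntegral_mul_eq_integral_of_tsupport_subset u (hk H hH_supp),
    setIntegral_mul_eq_integral_of_tsupport_subset g (hk U hU_supp)]
  simp only [← hUH.fderiv_mollify hU_loc (ρ k)]
  rw [hasWeakLineDerivOn_iff_integral.1 h _ (contDiff_mollify (ρ k) hU_loc)
    (hK.of_isClosed_subset (isClosed_tsupport _) (hk U hU_supp)) ((hk U hU_supp).trans hKΩ)]

theorem integral_mul_add_eq_neg_integral_mul (h : HasWeakLineDerivOn μ Ω u g v) (hΩ : IsOpen Ω)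
    (hu : LocallyIntegrableOn u Ω μ) (hg : LocallyIntegrableOn g Ω μ)
    (hu_sq : LocallyIntegrableOn (fun x => u x ^ 2) Ω μ)
    (hg_sq : LocallyIntegrableOn (fun x => g x ^ 2) Ω μ)
    (hχ : ContDiff ℝ (⊤ : ℕ∞) χ) (hχ_supp : HasCompactSupport χ) (hχΩ : tsupport χ ⊆ Ω) :
    ∫ x, u x * (χ x * g x + fderiv ℝ χ x v * u x) ∂μ = -∫ x, g x * (χ x * u x) ∂μ := by
  have hχ' : Continuous fun x => fderiv ℝ χ x v :=
    (hχ.continuous_fderiv (by simp)).clm_apply continuous_const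
  have hχ'_supp : tsupport (fun x => fderiv ℝ χ x v) ⊆ tsupport χ :=
    tsupport_fderiv_apply_subset ℝ v
  exact h.integral_mul_eq_neg_integral_mul hu hg hu_sq hg_sq
    (h.mul_of_tsupport_subset hu hg hχ hχ_supp hχΩ)
    (memLp_two_mul_of_tsupport_subset hu hu_sq hχ.continuous hχ_supp hχΩ)
    ((memLp_two_mul_of_tsupport_subset hg hg_sq hχ.continuous hχ_supp hχΩ).add
      (memLp_two_mul_of_tsupport_subset hu hu_sq hχ' (hχ_supp.fderiv_apply ℝ v)
        (hχ'_supp.trans hχΩ)))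
    hΩ hχ_supp hχΩ tsupport_mul_subset_left
    ((tsupport_add _ _).trans (union_subset tsupport_mul_subset_left
      (tsupport_mul_subset_left.trans hχ'_supp)))

theorem sq (h : HasWeakLineDerivOn μ Ω u g v) (hΩ : IsOpen Ω)
    (hu : LocallyIntegrableOn u Ω μ) (hg : LocallyIntegrableOn g Ω μ)
    (hu_sq : LocallyIntegrableOn (fun x => u x ^ 2) Ω μ)
    (hg_sq : LocallyIntegrableOn (fun x => g x ^ 2) Ω μ) :
    HasWeakLineDerivOn μ Ω (fun x => u x ^ 2) (fun x => 2 * (u x * g x)) v := by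
  refine hasWeakLineDerivOn_iff_integral.2 fun ψ hψ hψ_supp hψΩ => ?_
  have hψug := integrable_mul_of_tsupport_subset (locallyIntegrableOn_mul hΩ hu hg hu_sq hg_sq)
    hψ.continuous hψ_supp hψΩ
  have hu_sqψ' := integrable_mul_fderiv_of_tsupport_subset hu_sq hψ hψ_supp hψΩ v
  have hparts := h.integral_mul_add_eq_neg_integral_mul hΩ hu hg hu_sq hg_sq hψ hψ_supp hψΩ
  have hsplit : ∫ x, u x * (ψ x * g x + fderiv ℝ ψ x v * u x) ∂μ
      = ∫ x, ψ x * (u x * g x) ∂μ + ∫ x, u x ^ 2 * fderiv ℝ ψ x v ∂μ := by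
    rw [← integral_add hψug hu_sqψ']
    congr 1 with x
    ring
  have hswap : ∫ x, g x * (ψ x * u x) ∂μ = ∫ x, ψ x * (u x * g x) ∂μ := by
    congr 1 with x
    ring
  have htwo : ∫ x, 2 * (u x * g x) * ψ x ∂μ = 2 * ∫ x, ψ x * (u x * g x) ∂μ := by
    rw [← integral_const_mul]
    congr 1 with x
    ring
  rw [htwo]
  linarith

end HasWeakLineDerivOn

end WeakDerivative

section WeightedSobolev

/-- The density `ω₀ u² + ∑ⱼ ωⱼ gⱼ²` of the square of a weighted first-order Sobolev norm, where `u`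
is a function and the `g j` are its derivatives in finitely many directions. -/
def sobolevDensity {V J : Type*} [Fintype J] (ω₀ : V → ℝ) (ω : J → V → ℝ) (u : V → ℝ)
    (g : J → V → ℝ) (x : V) : ℝ :=
  ω₀ x * u x ^ 2 + ∑ j, ω j x * g j x ^ 2

variable {V J : Type*} [Fintype J] {ω₀ u χ : V → ℝ} {ω g d : J → V → ℝ}

theorem sobolevDensity_nonneg {x : V} (hω₀ : 0 ≤ ω₀ x) (hω : ∀ j, 0 ≤ ω j x) :
    0 ≤ sobolevDensity ω₀ ω u g x :=
  add_nonneg (mul_nonneg hω₀ (sq_nonneg _))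
    (Finset.sum_nonneg fun j _ => mul_nonneg (hω j) (sq_nonneg _))

theorem sobolevDensity_add_le {u' : V → ℝ} {g' : J → V → ℝ} {x : V} (hω₀ : 0 ≤ ω₀ x)
    (hω : ∀ j, 0 ≤ ω j x) :
    sobolevDensity ω₀ ω (u + u') (g + g') x
      ≤ 2 * (sobolevDensity ω₀ ω u g x + sobolevDensity ω₀ ω u' g' x) := by
  have hterm {c a a' : ℝ} (hc : 0 ≤ c) : c * (a + a') ^ 2 ≤ 2 * (c * a ^ 2 + c * a' ^ 2) := by
    rw [← mul_add, mul_left_comm]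
    gcongr
    exact add_sq_le
  calc sobolevDensity ω₀ ω (u + u') (g + g') x
      ≤ 2 * (ω₀ x * u x ^ 2 + ω₀ x * u' x ^ 2)
        + ∑ j, 2 * (ω j x * g j x ^ 2 + ω j x * g' j x ^ 2) :=
        add_le_add (hterm hω₀) (Finset.sum_le_sum fun j _ => hterm (hω j))
    _ = _ := by
        simp only [sobolevDensity, ← Finset.mul_sum, Finset.sum_add_distrib]
        ring

theorem sobolevDensity_sub_cutoff_le {x : V} {B : ℝ} (hω₀ : 0 ≤ ω₀ x) (hω : ∀ j, 0 ≤ ω j x)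
    (hχ : χ x ∈ Icc 0 1) (hd : ∀ j, ω j x * d j x ^ 2 ≤ B) :
    sobolevDensity ω₀ ω (u - χ * u) (fun j => g j - (χ * g j + d j * u)) x
      ≤ 2 * (sobolevDensity ω₀ ω u g x + Fintype.card J * (B * u x ^ 2)) := by
  have hone_sub {c a : ℝ} (hc : 0 ≤ c) : c * (a - χ x * a) ^ 2 ≤ c * a ^ 2 := by
    have : (1 - χ x) ^ 2 ≤ 1 := pow_le_one₀ (sub_nonneg.2 hχ.2) (sub_le_self 1 hχ.1)
    rw [← one_sub_mul, mul_pow]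
    exact mul_le_mul_of_nonneg_left (mul_le_of_le_one_left (sq_nonneg a) this) hc
  have hderiv (j : J) : ω j x * (g j x - (χ x * g j x + d j x * u x)) ^ 2
      ≤ 2 * (ω j x * g j x ^ 2 + B * u x ^ 2) := by
    calc ω j x * (g j x - (χ x * g j x + d j x * u x)) ^ 2
        = ω j x * ((g j x - χ x * g j x) + -(d j x * u x)) ^ 2 := by ring
      _ ≤ ω j x * (2 * ((g j x - χ x * g j x) ^ 2 + (-(d j x * u x)) ^ 2)) :=
          mul_le_mul_of_nonneg_left add_sq_le (hω j)
      _ = 2 * (ω j x * (g j x - χ x * g j x) ^ 2 + ω j x * d j x ^ 2 * u x ^ 2) := by ring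
      _ ≤ 2 * (ω j x * g j x ^ 2 + B * u x ^ 2) := by
          gcongr 2 * (?_ + ?_ * _)
          exacts [hone_sub (hω j), hd j]
  calc sobolevDensity ω₀ ω (u - χ * u) (fun j => g j - (χ * g j + d j * u)) x
      ≤ ω₀ x * u x ^ 2 + ∑ j, 2 * (ω j x * g j x ^ 2 + B * u x ^ 2) :=
        add_le_add (hone_sub hω₀) (Finset.sum_le_sum fun j _ => hderiv j)
    _ ≤ 2 * (ω₀ x * u x ^ 2) + ∑ j, 2 * (ω j x * g j x ^ 2 + B * u x ^ 2) := by
        gcongr ?_ + _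
        exact le_mul_of_one_le_left (mul_nonneg hω₀ (sq_nonneg _)) one_le_two
    _ = _ := by
        simp only [sobolevDensity, ← Finset.mul_sum, Finset.sum_add_distrib, Finset.sum_const,
          Finset.card_univ, nsmul_eq_mul]
        ring

variable [MeasurableSpace V] {μ : Measure V}

theorem integrable_sobolevDensity (hu : Integrable (fun x => ω₀ x * u x ^ 2) μ)
    (hg : ∀ j, Integrable (fun x => ω j x * g j x ^ 2) μ) :
    Integrable (sobolevDensity ω₀ ω u g) μ :=
  hu.add (integrable_finsetSum _ fun j _ => hg j)

theorem integral_sobolevDensity (hu : Integrable (fun x => ω₀ x * u x ^ 2) μ)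
    (hg : ∀ j, Integrable (fun x => ω j x * g j x ^ 2) μ) :
    ∫ x, sobolevDensity ω₀ ω u g x ∂μ
      = ∫ x, ω₀ x * u x ^ 2 ∂μ + ∑ j, ∫ x, ω j x * g j x ^ 2 ∂μ := by
  have hsum := integrable_finsetSum Finset.univ fun j _ => hg j
  rw [← integral_finsetSum _ fun j _ => hg j, ← integral_add hu hsum]
  rfl

theorem aestronglyMeasurable_sobolevDensity_sub_cutoff
    (hω₀ : AEStronglyMeasurable ω₀ μ) (hω : ∀ j, AEStronglyMeasurable (ω j) μ)
    (hu : AEStronglyMeasurable u μ) (hg : ∀ j, AEStronglyMeasurable (g j) μ)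
    (hχ : AEStronglyMeasurable χ μ) (hd : ∀ j, AEStronglyMeasurable (d j) μ) :
    AEStronglyMeasurable
      (sobolevDensity ω₀ ω (u - χ * u) fun j => g j - (χ * g j + d j * u)) μ :=
  (hω₀.mul ((hu.sub (hχ.mul hu)).pow 2)).add (Finset.aestronglyMeasurable_fun_sum _ fun j _ =>
    (hω j).mul (((hg j).sub ((hχ.mul (hg j)).add ((hd j).mul hu))).pow 2))

theorem setIntegral_sobolevDensity_add_le {Ω : Set V} {u' : V → ℝ} {g' : J → V → ℝ}
    (hΩ : MeasurableSet Ω) (hω₀ : ∀ x ∈ Ω, 0 ≤ ω₀ x) (hω : ∀ x ∈ Ω, ∀ j, 0 ≤ ω j x)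
    (h : IntegrableOn (sobolevDensity ω₀ ω u g) Ω μ)
    (h' : IntegrableOn (sobolevDensity ω₀ ω u' g') Ω μ) :
    ∫ x in Ω, sobolevDensity ω₀ ω (u + u') (g + g') x ∂μ
      ≤ 2 * (∫ x in Ω, sobolevDensity ω₀ ω u g x ∂μ
        + ∫ x in Ω, sobolevDensity ω₀ ω u' g' x ∂μ) := by
  rw [← integral_add h h', ← integral_const_mul]
  exact integral_mono_of_nonneg
    (ae_restrict_of_forall_mem hΩ fun x hx => sobolevDensity_nonneg (hω₀ x hx) (hω x hx))
    ((h.add h').const_mul 2)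
    (ae_restrict_of_forall_mem hΩ fun x hx => sobolevDensity_add_le (hω₀ x hx) (hω x hx))

end WeightedSobolev

theorem tendsto_integral_mul_sq_of_tendsto_eLpNorm {α ι : Type*} [MeasurableSpace α] {μ : Measure α}
    {l : Filter ι} {c : α → ℝ} {f : ι → α → ℝ} {M : ℝ} (hcM : ∀ᵐ x ∂μ, ‖c x‖ ≤ M)
    (hf : ∀ i, MemLp (f i) 2 μ) (hf_lim : Tendsto (fun i => eLpNorm (f i) 2 μ) l (𝓝 0)) :
    Tendsto (fun i => ∫ x, c x * f i x ^ 2 ∂μ) l (𝓝 0) := by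
  have hsq (i : ι) : ∫ x, M * f i x ^ 2 ∂μ = M * (eLpNorm (f i) 2 μ).toReal ^ 2 := by
    rw [integral_const_mul, (hf i).eLpNorm_eq_integral_rpow_norm (by norm_num) (by norm_num),
      ENNReal.toReal_ofReal (by positivity), ← Real.rpow_natCast,
      ← Real.rpow_mul (by positivity)]
    simp
  refine squeeze_zero_norm (fun i => ?_) ?_ (a := fun i => M * (eLpNorm (f i) 2 μ).toReal ^ 2)
  · rw [← hsq]
    refine norm_integral_le_of_norm_le ((hf i).integrable_sq.const_mul M) ?_
    filter_upwards [hcM] with x hx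
    rw [norm_mul, Real.norm_of_nonneg (sq_nonneg (f i x))]
    gcongr
  · simpa using ((ENNReal.tendsto_toReal ENNReal.zero_ne_top).comp hf_lim).pow 2 |>.const_mul M

section SmoothApproximation

variable {V J : Type*} [NormedAddCommGroup V] [NormedSpace ℝ V] [FiniteDimensional ℝ V]
  [MeasurableSpace V] [BorelSpace V] {μ : Measure V} [μ.IsAddHaarMeasure] [Fintype J]
  {ω₀ u χ : V → ℝ} {ω g : J → V → ℝ} {v : J → V} {K₀ Ω : Set V} {ε : ℝ}

theorem integrableOn_mul_sq_sub_mollify {K : Set V} {c f : V → ℝ} (hK : IsCompact K)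
    (hc : ContinuousOn c K) (hf : MemLp f 2 μ) (β : ContDiffBump (0 : V)) :
    IntegrableOn (fun x => c x * (f - mollify μ β f) x ^ 2) K μ :=
  (hf.sub (memLp_mollify β (by norm_num) (by norm_num) hf)).integrable_sq.integrableOn
    |>.continuousOn_mul hc hK

theorem tendsto_setIntegral_mul_sq_sub_mollify {ι : Type*} {l : Filter ι}
    {ρ : ι → ContDiffBump (0 : V)} {K : Set V} {c f : V → ℝ}
    (hρ : Tendsto (fun i => (ρ i).rOut) l (𝓝 0)) (hK : IsCompact K) (hc : ContinuousOn c K)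
    (hf : MemLp f 2 μ) :
    Tendsto (fun i => ∫ x in K, c x * (f - mollify μ (ρ i) f) x ^ 2 ∂μ) l (𝓝 0) := by
  obtain ⟨M, hM⟩ := hK.exists_bound_of_continuousOn hc
  refine tendsto_integral_mul_sq_of_tendsto_eLpNorm
    (ae_restrict_of_forall_mem hK.measurableSet hM)
    (fun i => (hf.sub (memLp_mollify (ρ i) (by norm_num) (by norm_num) hf)).restrict K) ?_
  simp only [eLpNorm_sub_comm f]
  exact tendsto_of_tendsto_of_tendsto_of_le_of_le tendsto_const_nhds
    (tendsto_eLpNorm_mollify_sub hρ (by norm_num) (by norm_num) hf) (fun _ => zero_le)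
    fun i => eLpNorm_mono_measure _ Measure.restrict_le_self

theorem exists_contDiff_setIntegral_sobolevDensity_sub_lt (hΩ : IsOpen Ω)
    (hω₀ : ContinuousOn ω₀ Ω) (hω : ∀ j, ContinuousOn (ω j) Ω) (hu : MemLp u 2 μ)
    (hg : ∀ j, MemLp (g j) 2 μ) (hug : ∀ j, HasWeakLineDerivOn μ univ u (g j) (v j))
    (hK₀ : IsCompact K₀) (hK₀Ω : K₀ ⊆ Ω) (hu_supp : tsupport u ⊆ K₀)
    (hg_supp : ∀ j, tsupport (g j) ⊆ K₀) (hε : 0 < ε) :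
    ∃ ψ : V → ℝ, ContDiff ℝ (⊤ : ℕ∞) ψ ∧ HasCompactSupport ψ ∧ tsupport ψ ⊆ Ω ∧
      IntegrableOn (sobolevDensity ω₀ ω (u - ψ) fun j => g j - fun x => fderiv ℝ ψ x (v j)) Ω μ ∧
      ∫ x in Ω,
        sobolevDensity ω₀ ω (u - ψ) (fun j => g j - fun x => fderiv ℝ ψ x (v j)) x ∂μ < ε := by
  obtain ⟨ρ, hρ⟩ := exists_contDiffBump_tendsto_rOut (V := V)
  obtain ⟨K, hK, hK₀K, hKΩ, hρK⟩ := exists_isCompact_eventually_tsupport_mollify_subset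
    (μ := μ) (F := ℝ) hρ hK₀ hΩ hK₀Ω
  have hu_loc : LocallyIntegrable u μ := hu.locallyIntegrable (by norm_num)
  have hmul_int {c f : V → ℝ} (hc : ContinuousOn c Ω) (hf : MemLp f 2 μ) (k : ℕ) :=
    integrableOn_mul_sq_sub_mollify hK (hc.mono hKΩ) hf (ρ k)
  have hlim {c f : V → ℝ} (hc : ContinuousOn c Ω) (hf : MemLp f 2 μ) :=
    tendsto_setIntegral_mul_sq_sub_mollify hρ hK (hc.mono hKΩ) hf
  have hlim_sum := (hlim hω₀ hu).add (tendsto_finsetSum Finset.univ fun j _ => hlim (hω j) (hg j))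
  simp only [Finset.sum_const_zero, add_zero] at hlim_sum
  obtain ⟨k, hkε, hkK⟩ := ((hlim_sum.eventually_lt_const hε).and hρK).exists
  have hψ_supp := hkK u hu_supp
  have hfderiv : (fun j => g j - fun x => fderiv ℝ (mollify μ (ρ k) u) x (v j))
      = fun j => g j - mollify μ (ρ k) (g j) := by
    simp only [(hug _).fderiv_mollify hu_loc]
  have hzero (f : V → ℝ) (hf : tsupport f ⊆ K₀) {x : V} (hx : x ∉ K) :
      (f - mollify μ (ρ k) f) x = 0 := by
    rw [Pi.sub_apply, image_eq_zero_of_notMem_tsupport fun h => hx (hK₀K (hf h)),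
      image_eq_zero_of_notMem_tsupport fun h => hx (hkK f hf h), sub_zero]
  have hvanish (x : V) (hx : x ∉ K) : sobolevDensity ω₀ ω (u - mollify μ (ρ k) u)
      (fun j => g j - mollify μ (ρ k) (g j)) x = 0 := by
    simp [sobolevDensity, hzero _ hu_supp hx, hzero _ (hg_supp _) hx]
  refine ⟨mollify μ (ρ k) u, contDiff_mollify (ρ k) hu_loc,
    hK.of_isClosed_subset (isClosed_tsupport _) hψ_supp, hψ_supp.trans hKΩ, ?_⟩
  rw [hfderiv]
  refine ⟨IntegrableOn.of_forall_sdiff_eq_zero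
    (integrable_sobolevDensity (hmul_int hω₀ hu k) fun j => hmul_int (hω j) (hg j) k)
    hΩ.measurableSet fun x hx => hvanish x hx.2, ?_⟩
  rwa [setIntegral_eq_of_subset_of_forall_sdiff_eq_zero hΩ.measurableSet hKΩ
      fun x hx => hvanish x hx.2,
    integral_sobolevDensity (hmul_int hω₀ hu k) fun j => hmul_int (hω j) (hg j) k]

theorem exists_contDiff_setIntegral_sobolevDensity_mul_sub_lt (hΩ : IsOpen Ω)
    (hω₀ : ContinuousOn ω₀ Ω) (hω : ∀ j, ContinuousOn (ω j) Ω) (hu : LocallyIntegrableOn u Ω μ)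
    (hu_sq : LocallyIntegrableOn (fun x => u x ^ 2) Ω μ) (hg : ∀ j, LocallyIntegrableOn (g j) Ω μ)
    (hg_sq : ∀ j, LocallyIntegrableOn (fun x => g j x ^ 2) Ω μ)
    (hug : ∀ j, HasWeakLineDerivOn μ Ω u (g j) (v j)) (hχ : ContDiff ℝ (⊤ : ℕ∞) χ)
    (hχ_supp : HasCompactSupport χ) (hχΩ : tsupport χ ⊆ Ω) (hε : 0 < ε) :
    ∃ ψ : V → ℝ, ContDiff ℝ (⊤ : ℕ∞) ψ ∧ HasCompactSupport ψ ∧ tsupport ψ ⊆ Ω ∧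
      IntegrableOn (sobolevDensity ω₀ ω (χ * u - ψ) fun j =>
        χ * g j + (fun x => fderiv ℝ χ x (v j)) * u - fun x => fderiv ℝ ψ x (v j)) Ω μ ∧
      ∫ x in Ω, sobolevDensity ω₀ ω (χ * u - ψ) (fun j =>
        χ * g j + (fun x => fderiv ℝ χ x (v j)) * u - fun x => fderiv ℝ ψ x (v j)) x ∂μ < ε := by
  have hχ' (j : J) : Continuous fun x => fderiv ℝ χ x (v j) :=
    (hχ.continuous_fderiv (by simp)).clm_apply continuous_const
  have hχ'_supp (j : J) : tsupport (fun x => fderiv ℝ χ x (v j)) ⊆ tsupport χ :=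
    tsupport_fderiv_apply_subset ℝ _
  exact exists_contDiff_setIntegral_sobolevDensity_sub_lt hΩ hω₀ hω
    (memLp_two_mul_of_tsupport_subset hu hu_sq hχ.continuous hχ_supp hχΩ)
    (fun j => (memLp_two_mul_of_tsupport_subset (hg j) (hg_sq j) hχ.continuous hχ_supp hχΩ).add
      (memLp_two_mul_of_tsupport_subset hu hu_sq (hχ' j) (hχ_supp.fderiv_apply ℝ _)
        ((hχ'_supp j).trans hχΩ)))
    (fun j => (hug j).mul_of_tsupport_subset hu (hg j) hχ hχ_supp hχΩ)
    hχ_supp hχΩ tsupport_mul_subset_left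
    (fun j => (tsupport_add _ _).trans (union_subset tsupport_mul_subset_left
      (tsupport_mul_subset_left.trans (hχ'_supp j)))) hε

end SmoothApproximation

section LogCutoff

theorem exists_forall_deriv_smoothTransition_mem_Icc :
    ∃ M, ∀ x, deriv Real.smoothTransition x ∈ Icc 0 M := by
  have hsupp : HasCompactSupport (deriv Real.smoothTransition) := by
    refine HasCompactSupport.intro isCompact_Icc (K := Icc 0 1) fun x hx => ?_
    rcases lt_or_ge x 0 with hx₀ | hx₀
    · exact IsLocalMin.deriv_eq_zero <| .of_forall fun y =>
        (Real.smoothTransition.zero_of_nonpos hx₀.le).trans_le (Real.smoothTransition.nonneg y)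
    · have hx₁ : 1 ≤ x := le_of_not_ge fun hx₁ => hx ⟨hx₀, hx₁⟩
      exact IsLocalMax.deriv_eq_zero <| .of_forall fun y =>
        (Real.smoothTransition.le_one y).trans_eq (Real.smoothTransition.one_of_one_le hx₁).symm
  obtain ⟨M, hM⟩ := hsupp.exists_bound_of_continuous
    ((Real.smoothTransition.contDiff (n := 1)).continuous_deriv le_rfl)
  exact ⟨M, fun x => ⟨Real.smoothTransition.monotone.deriv_nonneg,
    (le_abs_self _).trans (hM x)⟩⟩

/-- A substitute for `|log z|` in the logarithmic cutoff near `z = 0` and `z = ∞`: smooth, at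
least `1` and proper on `(0, ∞)`. -/
noncomputable def logGauge (z : ℝ) : ℝ := z - Real.log z

variable {k z : ℝ}

theorem one_le_logGauge (hz : 0 < z) : 1 ≤ logGauge z := by
  have hlog := Real.log_le_sub_one_of_pos hz
  rw [logGauge]
  linarith

theorem hasDerivAt_logGauge (hz : z ≠ 0) : HasDerivAt logGauge (1 - z⁻¹) z :=
  (hasDerivAt_id z).sub (Real.hasDerivAt_log hz)

theorem contDiffOn_logGauge {m : WithTop ℕ∞} : ContDiffOn ℝ m logGauge (Ioi 0) :=
  contDiffOn_id.sub (contDiffOn_id.log fun _ hz => hz.ne')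

theorem setOf_logGauge_le_subset_Icc (c : ℝ) :
    {z | 0 < z ∧ logGauge z ≤ c} ⊆ Icc (Real.exp (-c)) (2 * c) := by
  rintro z ⟨hz, hzc⟩
  rw [logGauge] at hzc
  refine ⟨(Real.le_log_iff_exp_le hz).1 (by linarith), ?_⟩
  have hlog := Real.log_le_sub_one_of_pos (half_pos hz)
  have hlog_two : Real.log 2 < 1 := by linarith [Real.log_two_lt_d9]
  rw [Real.log_div hz.ne' two_ne_zero] at hlog
  linarith

theorem isCompact_setOf_logGauge_le (c : ℝ) : IsCompact {z | 0 < z ∧ logGauge z ≤ c} := by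
  have heq : {z | 0 < z ∧ logGauge z ≤ c}
      = Icc (Real.exp (-c)) (2 * c) ∩ logGauge ⁻¹' Iic c := by
    ext z
    exact ⟨fun hz => ⟨setOf_logGauge_le_subset_Icc c hz, hz.2⟩,
      fun hz => ⟨(Real.exp_pos _).trans_le hz.1.1, hz.2⟩⟩
  rw [heq]
  refine isCompact_Icc.of_isClosed_subset (ContinuousOn.preimage_isClosed_of_isClosed ?_
    isClosed_Icc isClosed_Iic) inter_subset_left
  exact (contDiffOn_logGauge (m := 0)).continuousOn.mono fun z hz => (Real.exp_pos _).trans_le hz.1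

/-- The logarithmic cutoff: `1` where `logGauge z ≤ k` and `0` where `2 * k ≤ logGauge z`. The
indicator is needed because `Real.log z` is `log |z|` for negative `z`. -/
noncomputable def logCutoff (k : ℝ) : ℝ → ℝ :=
  (Ioi 0).indicator fun z => Real.smoothTransition (2 - logGauge z / k)

theorem logCutoff_of_pos (hz : 0 < z) :
    logCutoff k z = Real.smoothTransition (2 - logGauge z / k) :=
  indicator_of_mem (mem_Ioi.2 hz) _

theorem logCutoff_nonneg : 0 ≤ logCutoff k z :=
  indicator_nonneg (fun _ _ => Real.smoothTransition.nonneg _) z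

theorem logCutoff_le_one : logCutoff k z ≤ 1 :=
  indicator_apply_le' (fun _ => Real.smoothTransition.le_one _) fun _ => zero_le_one

theorem logCutoff_eq_one (hk : 0 < k) (hz : 0 < z) (hzk : logGauge z ≤ k) :
    logCutoff k z = 1 := by
  rw [logCutoff_of_pos hz]
  refine Real.smoothTransition.one_of_one_le ?_
  linarith [(div_le_one hk).2 hzk]

theorem tsupport_logCutoff_subset (hk : 0 < k) :
    tsupport (logCutoff k) ⊆ {z | 0 < z ∧ logGauge z ≤ 2 * k} := by
  refine closure_minimal (fun z hz => ?_) (isCompact_setOf_logGauge_le _).isClosed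
  have hz₀ : 0 < z := mem_of_indicator_ne_zero hz
  refine ⟨hz₀, ?_⟩
  by_contra! hlt
  refine hz ((logCutoff_of_pos hz₀).trans (Real.smoothTransition.zero_of_nonpos ?_))
  linarith [(le_div_iff₀ hk).2 hlt.le]

theorem hasCompactSupport_logCutoff (hk : 0 < k) : HasCompactSupport (logCutoff k) :=
  (isCompact_setOf_logGauge_le _).of_isClosed_subset (isClosed_tsupport _)
    (tsupport_logCutoff_subset hk)

theorem logCutoff_eventuallyEq (hz : 0 < z) :
    logCutoff k =ᶠ[𝓝 z] fun y => Real.smoothTransition (2 - logGauge y / k) :=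
  (eventually_gt_nhds hz).mono fun _ hy => logCutoff_of_pos hy

theorem contDiff_logCutoff (hk : 0 < k) {m : ℕ∞} : ContDiff ℝ m (logCutoff k) := by
  refine contDiff_iff_contDiffAt.2 fun z => ?_
  by_cases hz : z ∈ tsupport (logCutoff k)
  · have hz₀ : 0 < z := (tsupport_logCutoff_subset hk hz).1
    refine ContDiffAt.congr_of_eventuallyEq ?_ (logCutoff_eventuallyEq hz₀)
    exact Real.smoothTransition.contDiffAt.comp z
      (contDiffAt_const.sub ((contDiffOn_logGauge.contDiffAt (Ioi_mem_nhds hz₀)).div_const k))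
  · exact contDiffAt_const.congr_of_eventuallyEq (notMem_tsupport_iff_eventuallyEq.1 hz)

theorem deriv_logCutoff (hz : 0 < z) : deriv (logCutoff k) z
    = deriv Real.smoothTransition (2 - logGauge z / k) * (-(1 - z⁻¹) / k) := by
  have hinner : HasDerivAt (fun y => 2 - logGauge y / k) (-(1 - z⁻¹) / k) z := by
    rw [neg_div]
    exact ((hasDerivAt_logGauge hz.ne').div_const k).const_sub 2
  rw [(logCutoff_eventuallyEq hz).deriv_eq]
  have hS : DifferentiableAt ℝ Real.smoothTransition (2 - logGauge z / k) :=
    (Real.smoothTransition.contDiff (n := 1)).differentiable (by simp) _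
  exact (hS.hasDerivAt.comp z hinner).deriv

theorem neg_mul_le_deriv_logCutoff {M : ℝ} (hM : ∀ x, deriv Real.smoothTransition x ∈ Icc 0 M)
    (hk : 1 ≤ k) (hz : 0 < z) : -(M * z) ≤ deriv (logCutoff k) z := by
  rw [deriv_logCutoff hz]
  obtain ⟨hS, hSM⟩ := hM (2 - logGauge z / k)
  have hinner : -z ≤ -(1 - z⁻¹) / k := by
    rw [le_div_iff₀ (by linarith)]
    rcases le_total z 1 with hz₁ | hz₁
    · have := (one_le_inv₀ hz).2 hz₁
      nlinarith
    · have := inv_pos.2 hz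
      nlinarith
  calc -(M * z) ≤ deriv Real.smoothTransition (2 - logGauge z / k) * -z := by nlinarith
    _ ≤ _ := mul_le_mul_of_nonneg_left hinner hS

theorem mul_sq_deriv_logCutoff_le {M : ℝ} (hM : ∀ x, deriv Real.smoothTransition x ∈ Icc 0 M)
    (hk : 0 < k) (hz : 0 < z) :
    z * deriv (logCutoff k) z ^ 2 ≤ 4 * M ^ 2 * (1 / (z * logGauge z ^ 2) + z) := by
  have hL := one_le_logGauge hz
  by_cases hzk : 2 * k < logGauge z
  · have hzero : deriv (logCutoff k) z = 0 := by
      by_contra hne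
      exact hzk.not_ge (tsupport_logCutoff_subset hk (support_deriv_subset hne)).2
    rw [hzero, zero_pow two_ne_zero, mul_zero]
    positivity
  · rw [deriv_logCutoff hz]
    obtain ⟨hS, hSM⟩ := hM (2 - logGauge z / k)
    have hk_sq : 1 / k ^ 2 ≤ 4 / logGauge z ^ 2 := by
      rw [div_le_div_iff₀ (by positivity) (by positivity)]
      nlinarith
    have hinner : z * (1 - z⁻¹) ^ 2 ≤ 1 / z + z := by
      have : z * (1 - z⁻¹) ^ 2 = 1 / z + z - 2 := by field_simp; ring
      linarith
    calc z * (deriv Real.smoothTransition (2 - logGauge z / k) * (-(1 - z⁻¹) / k)) ^ 2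
        = deriv Real.smoothTransition (2 - logGauge z / k) ^ 2 * (z * (1 - z⁻¹) ^ 2)
          * (1 / k ^ 2) := by ring
      _ ≤ M ^ 2 * (1 / z + z) * (4 / logGauge z ^ 2) := by gcongr
      _ = 4 * M ^ 2 * (1 / (z * logGauge z ^ 2) + z / logGauge z ^ 2) := by
        field_simp
      _ ≤ 4 * M ^ 2 * (1 / (z * logGauge z ^ 2) + z) := by
        gcongr
        exact div_le_self hz.le (one_le_pow₀ hL)

theorem exists_deriv_logCutoff_bounds : ∃ C, 0 ≤ C ∧ ∀ {k z : ℝ}, 1 ≤ k → 0 < z →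
    -(C * z) ≤ deriv (logCutoff k) z ∧
      z * deriv (logCutoff k) z ^ 2 ≤ C * (1 / (z * logGauge z ^ 2) + z) := by
  obtain ⟨M, hM⟩ := exists_forall_deriv_smoothTransition_mem_Icc
  refine ⟨max M (4 * M ^ 2), le_max_of_le_right (by positivity), fun hk hz => ⟨?_, ?_⟩⟩
  · refine le_trans ?_ (neg_mul_le_deriv_logCutoff hM hk hz)
    gcongr
    exact le_max_left _ _
  · refine (mul_sq_deriv_logCutoff_le hM (one_pos.trans_le hk) hz).trans ?_
    gcongr
    exact le_max_right _ _

end LogCutoff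

section HalfSpaceCutoff

theorem tsupport_mul_fst_snd_subset {X Y : Type*} [TopologicalSpace X] [TopologicalSpace Y]
    (β : X → ℝ) (ζ : Y → ℝ) :
    tsupport (fun p : X × Y => β p.1 * ζ p.2) ⊆ tsupport β ×ˢ tsupport ζ :=
  closure_minimal (fun _ hp => ⟨subset_tsupport _ (left_ne_zero_of_mul hp),
    subset_tsupport _ (right_ne_zero_of_mul hp)⟩)
    ((isClosed_tsupport _).prod (isClosed_tsupport _))

variable {X : Type*} [NormedAddCommGroup X] [NormedSpace ℝ X]

theorem exists_bump_fderiv_sq_le (X : Type*) [NormedAddCommGroup X] [NormedSpace ℝ X]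
    [FiniteDimensional ℝ X] :
    ∃ C, ∀ R > (0 : ℝ), ∃ β : X → ℝ, ContDiff ℝ (⊤ : ℕ∞) β ∧ HasCompactSupport β ∧
      (∀ x, β x ∈ Icc 0 1) ∧ (∀ x, ‖x‖ ≤ R → β x = 1) ∧
      ∀ x v, fderiv ℝ β x v ^ 2 ≤ C * ‖v‖ ^ 2 / R ^ 2 := by
  let f : ContDiffBump (0 : X) := ⟨1, 2, one_pos, one_lt_two⟩
  have hf : ContDiff ℝ (⊤ : ℕ∞) f := f.contDiff
  obtain ⟨C, hC⟩ := (f.hasCompactSupport.fderiv ℝ).exists_bound_of_continuous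
    (hf.continuous_fderiv (by simp))
  refine ⟨C ^ 2, fun R hR => ⟨fun x => f (R⁻¹ • x), hf.comp (contDiff_id.const_smul R⁻¹),
    f.hasCompactSupport.comp_homeomorph (Homeomorph.smulOfNeZero R⁻¹ (inv_ne_zero hR.ne')),
    fun x => ⟨f.nonneg, f.le_one⟩, fun x hx => f.one_of_mem_closedBall ?_, fun x v => ?_⟩⟩
  · rw [mem_closedBall_zero_iff, norm_smul, norm_inv, Real.norm_of_nonneg hR.le,
      inv_mul_le_iff₀ hR, mul_one]
    exact hx
  · have hcomp : fderiv ℝ (fun x => f (R⁻¹ • x)) x v = R⁻¹ * fderiv ℝ f (R⁻¹ • x) v := by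
      rw [fderiv_comp_smul]
      simp
    have hbound := (fderiv ℝ f (R⁻¹ • x)).le_of_opNorm_le (hC _) v
    calc fderiv ℝ (fun x => f (R⁻¹ • x)) x v ^ 2
        = ‖fderiv ℝ f (R⁻¹ • x) v‖ ^ 2 / R ^ 2 := by
          rw [hcomp, Real.norm_eq_abs, sq_abs]
          ring
      _ ≤ (C * ‖v‖) ^ 2 / R ^ 2 := by gcongr
      _ = C ^ 2 * ‖v‖ ^ 2 / R ^ 2 := by ring

/-- The properties of the cutoffs `χ` on the half-space `X × (0, ∞)` which drive the density
argument: `χ` is `1` where `‖x‖ ≤ R` and `logGauge z ≤ k`, and its derivatives are controlled by a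
constant `C` that is meant to be independent of the parameters `k` and `R`. -/
structure IsHalfSpaceCutoff (C k R : ℝ) (χ : X × ℝ → ℝ) : Prop where
  contDiff : ContDiff ℝ (⊤ : ℕ∞) χ
  hasCompactSupport : HasCompactSupport χ
  tsupport_subset : tsupport χ ⊆ {p | 0 < p.2 ∧ logGauge p.2 ≤ 2 * k}
  mem_Icc (p) : χ p ∈ Icc 0 1
  eq_one {p} : ‖p.1‖ ≤ R → 0 < p.2 → logGauge p.2 ≤ k → χ p = 1
  neg_mul_le_fderiv_normal {p} : 0 < p.2 → -(C * p.2) ≤ fderiv ℝ χ p (0, 1)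
  mul_sq_fderiv_normal_le {p} : 0 < p.2 →
    p.2 * fderiv ℝ χ p (0, 1) ^ 2 ≤ C * (1 / (p.2 * logGauge p.2 ^ 2) + p.2)
  sq_fderiv_tangential_le {p} (v : X) : fderiv ℝ χ p (v, 0) ^ 2 ≤ C * ‖v‖ ^ 2 / R ^ 2

theorem fderiv_mul_fst_snd {β : X → ℝ} {ζ : ℝ → ℝ} {p : X × ℝ}
    (hβ : DifferentiableAt ℝ β p.1) (hζ : DifferentiableAt ℝ ζ p.2) (v : X) (t : ℝ) :
    fderiv ℝ (fun p : X × ℝ => β p.1 * ζ p.2) p (v, t)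
      = β p.1 * (t * deriv ζ p.2) + ζ p.2 * fderiv ℝ β p.1 v := by
  have hβ' : HasFDerivAt (fun p : X × ℝ => β p.1) _ p := hβ.hasFDerivAt.comp p hasFDerivAt_fst
  have hζ' : HasFDerivAt (fun p : X × ℝ => ζ p.2) _ p := hζ.hasFDerivAt.comp p hasFDerivAt_snd
  rw [(hβ'.fun_mul hζ').fderiv]
  simp

theorem exists_isHalfSpaceCutoff (X : Type*) [NormedAddCommGroup X] [NormedSpace ℝ X]
    [FiniteDimensional ℝ X] :
    ∃ C, 0 ≤ C ∧ ∀ k ≥ (1 : ℝ), ∀ R > (0 : ℝ), ∃ χ : X × ℝ → ℝ, IsHalfSpaceCutoff C k R χ := by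
  obtain ⟨A, hA₀, hA⟩ := exists_deriv_logCutoff_bounds
  obtain ⟨B, hB⟩ := exists_bump_fderiv_sq_le X
  refine ⟨max A B, hA₀.trans (le_max_left _ _), fun k hk R hR => ?_⟩
  obtain ⟨β, hβ, hβ_supp, hβ_mem, hβ_one, hβ_fderiv⟩ := hB R hR
  have hk₀ : 0 < k := one_pos.trans_le hk
  have hζ : ContDiff ℝ (⊤ : ℕ∞) (logCutoff k) := contDiff_logCutoff hk₀
  have hfderiv (p : X × ℝ) (v : X) (t : ℝ) :=
    fderiv_mul_fst_snd (hβ.differentiable (by simp) p.1) (hζ.differentiable (by simp) p.2) v t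
  have hsupp := tsupport_mul_fst_snd_subset β (logCutoff k)
  have hsq_le {t a c : ℝ} (ht : t ∈ Icc 0 1) (ha : a ^ 2 ≤ c) : (t * a) ^ 2 ≤ c := by
    rw [mul_pow]
    exact (mul_le_of_le_one_left (sq_nonneg a) (pow_le_one₀ ht.1 ht.2)).trans ha
  refine ⟨fun p => β p.1 * logCutoff k p.2,
    { contDiff := (hβ.comp contDiff_fst).mul (hζ.comp contDiff_snd)
      hasCompactSupport := (hβ_supp.prod (hasCompactSupport_logCutoff hk₀)).of_isClosed_subset
        (isClosed_tsupport _) hsupp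
      tsupport_subset := fun p hp => tsupport_logCutoff_subset hk₀ (hsupp hp).2
      mem_Icc := fun p => unitInterval.mul_mem (hβ_mem _) ⟨logCutoff_nonneg, logCutoff_le_one⟩
      eq_one := fun {p} hp hz hzk => by rw [hβ_one _ hp, logCutoff_eq_one hk₀ hz hzk, mul_one]
      neg_mul_le_fderiv_normal := fun {p} hz => ?_
      mul_sq_fderiv_normal_le := fun {p} hz => ?_
      sq_fderiv_tangential_le := fun {p} v => ?_ }⟩
  · have hA' : A * p.2 ≤ max A B * p.2 := by gcongr; exact le_max_left _ _
    rw [hfderiv, map_zero, mul_zero, add_zero, one_mul]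
    have hscaled := mul_le_mul_of_nonneg_left (hA hk hz).1 (hβ_mem p.1).1
    have hshrink := mul_le_of_le_one_left (mul_nonneg hA₀ hz.le) (hβ_mem p.1).2
    linarith
  · have hL := one_le_logGauge hz
    rw [hfderiv, map_zero, mul_zero, add_zero, one_mul, ← le_div_iff₀' hz]
    refine hsq_le (hβ_mem _) ((le_div_iff₀' hz).2 ((hA hk hz).2.trans ?_))
    gcongr
    exact le_max_left _ _
  · rw [hfderiv, zero_mul, mul_zero, zero_add]
    refine hsq_le ⟨logCutoff_nonneg, logCutoff_le_one⟩ ((hβ_fderiv _ v).trans ?_)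
    gcongr
    exact le_max_right _ _

end HalfSpaceCutoff

/-- The open half-space `X × (0, ∞)`. -/
abbrev halfSpace (X : Type*) : Set (X × ℝ) := {p | 0 < p.2}

theorem isOpen_halfSpace {X : Type*} [TopologicalSpace X] : IsOpen (halfSpace X) :=
  isOpen_lt continuous_const continuous_snd

/-- The part of the half-space where the cutoffs with parameters `k` and `R ≥ k` are `1`. -/
def cutoffCore (X : Type*) [NormedAddCommGroup X] (k : ℝ) : Set (X × ℝ) :=
  Metric.closedBall 0 k ×ˢ {z | 0 < z ∧ logGauge z ≤ k}

section CutoffCore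

variable {X : Type*} [NormedAddCommGroup X]

theorem cutoffCore_subset_halfSpace (k : ℝ) : cutoffCore X k ⊆ halfSpace X :=
  fun _ hp => hp.2.1

theorem isCompact_cutoffCore [ProperSpace X] (k : ℝ) : IsCompact (cutoffCore X k) :=
  (isCompact_closedBall 0 k).prod (isCompact_setOf_logGauge_le k)

theorem eventually_mem_cutoffCore {p : X × ℝ} (hp : 0 < p.2) :
    ∀ᶠ k : ℕ in atTop, p ∈ cutoffCore X k := by
  filter_upwards [eventually_ge_atTop ⌈max ‖p.1‖ (logGauge p.2)⌉₊] with k hk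
  obtain ⟨hkx, hkz⟩ := max_le_iff.1 (Nat.ceil_le.1 hk)
  exact ⟨mem_closedBall_zero_iff.2 hkx, hp, hkz⟩

end CutoffCore

section Hardy

theorem locallyIntegrableOn_of_snd_mul {X : Type*} [TopologicalSpace X] [MeasurableSpace X]
    [T2Space X] [LocallyCompactSpace X] [OpensMeasurableSpace X] {μ : Measure (X × ℝ)}
    {f : X × ℝ → ℝ} (h : IntegrableOn (fun p => p.2 * f p) (halfSpace X) μ) :
    LocallyIntegrableOn f (halfSpace X) μ :=
  locallyIntegrableOn_of_mul isOpen_halfSpace continuousOn_snd (fun _ hp => hp.ne')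
    h.locallyIntegrableOn

theorem two_mul_mul_le_sq_div_add_mul_sq {a b z : ℝ} (hz : 0 < z) :
    2 * (a * b) ≤ a ^ 2 / z + z * b ^ 2 := by
  have hsq : a ^ 2 / z + z * b ^ 2 - 2 * (a * b) = (a - z * b) ^ 2 / z := by
    field_simp
    ring
  have : 0 ≤ (a - z * b) ^ 2 / z := by positivity
  linarith

theorem hardy_pointwise {z L C c d u g : ℝ} (hz : 0 < z) (hL : 1 ≤ L) (hC : 0 ≤ C)
    (hc : c ∈ Icc 0 1) (hd : -(C * z) ≤ d) :
    c ^ 2 * (1 / (z * L ^ 2) * u ^ 2)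
      ≤ 2 * (u ^ 2 * (2 * c * d / L - c ^ 2 * (1 - z⁻¹) / L ^ 2) + c ^ 2 * L⁻¹ * (2 * (u * g)))
        + ((4 * C + 2) * (z * u ^ 2) + 8 * (z * g ^ 2)) := by
  have hL₀ : 0 < L := one_pos.trans_le hL
  obtain ⟨P, hP⟩ : ∃ P, P = c / L * u := ⟨_, rfl⟩
  have hcL : c / L ∈ Icc 0 1 :=
    ⟨div_nonneg hc.1 hL₀.le, (div_le_one hL₀).2 (hc.2.trans hL)⟩
  have hPu : P ^ 2 ≤ u ^ 2 := by
    rw [hP, mul_pow]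
    exact mul_le_of_le_one_left (sq_nonneg u) (pow_le_one₀ hcL.1 hcL.2)
  have hcutoff : -(C * (z * u ^ 2)) ≤ c / L * (d * u ^ 2) := by
    have hscaled := mul_le_mul_of_nonneg_left
      (mul_le_mul_of_nonneg_right hd (sq_nonneg u)) hcL.1
    have hshrink := mul_le_of_le_one_left (by positivity : 0 ≤ C * z * u ^ 2) hcL.2
    linarith
  -- One of the two terms `P² / z` on the right absorbs, by Young's inequality with weight `2 z`,
  -- the terms `2 P²` and `4 P g c`.
  have hzP := two_mul_mul_le_sq_div_add_mul_sq (a := P) (b := P) (mul_pos two_pos hz)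
  have hgP := two_mul_mul_le_sq_div_add_mul_sq (a := P) (b := -(2 * g * c)) (mul_pos two_pos hz)
  have hgc := mul_le_mul_of_nonneg_left (pow_le_one₀ (n := 2) hc.1 hc.2)
    (by positivity : 0 ≤ 8 * (z * g ^ 2))
  have hleft : c ^ 2 * (1 / (z * L ^ 2) * u ^ 2) = P ^ 2 / z := by
    rw [hP]; field_simp
  have hright : u ^ 2 * (2 * c * d / L - c ^ 2 * (1 - z⁻¹) / L ^ 2) + c ^ 2 * L⁻¹ * (2 * (u * g))
      = 2 * (c / L * (d * u ^ 2)) - P ^ 2 + P ^ 2 / z + 2 * P * g * c := by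
    rw [hP]; field_simp; ring
  have hhalf : P ^ 2 / z = 2 * (P ^ 2 / (2 * z)) := by field_simp
  have := mul_le_mul_of_nonneg_left hPu hz.le
  rw [hleft, hright, hhalf]
  linarith

variable {X : Type*} [NormedAddCommGroup X] [NormedSpace ℝ X]
  {C k R : ℝ} {χ u g : X × ℝ → ℝ} {p : X × ℝ}

namespace IsHalfSpaceCutoff

theorem tsupport_subset_halfSpace (h : IsHalfSpaceCutoff C k R χ) : tsupport χ ⊆ halfSpace X :=
  fun _ hp => (h.tsupport_subset hp).1

theorem contDiff_sq_div_logGauge (h : IsHalfSpaceCutoff C k R χ) :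
    ContDiff ℝ (⊤ : ℕ∞) fun p => χ p ^ 2 * (logGauge p.2)⁻¹ := by
  have hL : ContDiffOn ℝ (⊤ : ℕ∞) (fun p : X × ℝ => (logGauge p.2)⁻¹) (halfSpace X) :=
    (contDiffOn_logGauge.comp contDiff_snd.contDiffOn fun _ hp => hp).inv
      fun _ hp => (one_pos.trans_le (one_le_logGauge hp)).ne'
  simp only [sq, mul_assoc]
  exact h.contDiff.mul
    (contDiff_mul_of_tsupport_subset h.contDiff hL isOpen_halfSpace h.tsupport_subset_halfSpace)

theorem fderiv_sq_div_logGauge (h : IsHalfSpaceCutoff C k R χ) (hp : 0 < p.2) :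
    fderiv ℝ (fun p => χ p ^ 2 * (logGauge p.2)⁻¹) p (0, 1)
      = 2 * χ p * fderiv ℝ χ p (0, 1) / logGauge p.2
        - χ p ^ 2 * (1 - p.2⁻¹) / logGauge p.2 ^ 2 := by
  have hχ := (h.contDiff.differentiable (by simp) p).hasFDerivAt
  have hL : HasFDerivAt (fun p : X × ℝ => (logGauge p.2)⁻¹) _ p :=
    (((hasDerivAt_logGauge hp.ne').inv
      (one_pos.trans_le (one_le_logGauge hp)).ne').hasFDerivAt).comp p hasFDerivAt_snd
  have hχ_sq : HasFDerivAt (fun p => χ p ^ 2) _ p := hχ.pow 2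
  rw [(hχ_sq.fun_mul hL).fderiv]
  simp only [neg_sub, Nat.add_one_sub_one, pow_one, nsmul_eq_mul, Nat.cast_ofNat, add_apply,
    smul_apply, ContinuousLinearMap.comp_apply, ContinuousLinearMap.coe_snd',
    ContinuousLinearMap.toSpanSingleton_apply, smul_eq_mul, one_mul]
  ring

theorem eq_one_of_mem_cutoffCore (h : IsHalfSpaceCutoff C k R χ) (hkR : k ≤ R)
    (hp : p ∈ cutoffCore X k) : χ p = 1 :=
  h.eq_one ((mem_closedBall_zero_iff.1 hp.1).trans hkR) hp.2.1 hp.2.2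

theorem indicator_cutoffCore_le (h : IsHalfSpaceCutoff C k R χ) (hC : 0 ≤ C)
    (hkR : k ≤ R) (hp : 0 < p.2) :
    (cutoffCore X k).indicator (fun p => 1 / (p.2 * logGauge p.2 ^ 2) * u p ^ 2) p
      ≤ 2 * (u p ^ 2 * fderiv ℝ (fun p => χ p ^ 2 * (logGauge p.2)⁻¹) p (0, 1)
          + χ p ^ 2 * (logGauge p.2)⁻¹ * (2 * (u p * g p)))
        + ((4 * C + 2) * (p.2 * u p ^ 2) + 8 * (p.2 * g p ^ 2)) := by
  rw [h.fderiv_sq_div_logGauge hp]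
  refine le_trans ?_ (hardy_pointwise hp (one_le_logGauge hp) hC (h.mem_Icc p)
    (h.neg_mul_le_fderiv_normal hp))
  by_cases hpk : p ∈ cutoffCore X k
  · rw [indicator_of_mem hpk, h.eq_one_of_mem_cutoffCore hkR hpk, one_pow, one_mul]
  · rw [indicator_of_notMem hpk]
    positivity

end IsHalfSpaceCutoff

variable [FiniteDimensional ℝ X] [MeasurableSpace X] [BorelSpace X] {μ : Measure (X × ℝ)}
  [μ.IsAddHaarMeasure]

theorem setIntegral_cutoffCore_le (hu : LocallyIntegrableOn u (halfSpace X) μ)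
    (hg : LocallyIntegrableOn g (halfSpace X) μ)
    (hug : HasWeakLineDerivOn μ (halfSpace X) u g (0, 1))
    (hu_sq : IntegrableOn (fun p => p.2 * u p ^ 2) (halfSpace X) μ)
    (hg_sq : IntegrableOn (fun p => p.2 * g p ^ 2) (halfSpace X) μ) (hC : 0 ≤ C) (hkR : k ≤ R)
    (hχ : IsHalfSpaceCutoff C k R χ)
    (hf : IntegrableOn (fun p => 1 / (p.2 * logGauge p.2 ^ 2) * u p ^ 2) (cutoffCore X k) μ) :
    ∫ p in cutoffCore X k, 1 / (p.2 * logGauge p.2 ^ 2) * u p ^ 2 ∂μ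
      ≤ ∫ p in halfSpace X, ((4 * C + 2) * (p.2 * u p ^ 2) + 8 * (p.2 * g p ^ 2)) ∂μ := by
  set f : X × ℝ → ℝ := fun p => 1 / (p.2 * logGauge p.2 ^ 2) * u p ^ 2
  set ψ : X × ℝ → ℝ := fun p => χ p ^ 2 * (logGauge p.2)⁻¹ with hψ_def
  have hu_sq' := locallyIntegrableOn_of_snd_mul hu_sq
  have hg_sq' := locallyIntegrableOn_of_snd_mul hg_sq
  have hug_loc : LocallyIntegrableOn (fun p => 2 * (u p * g p)) (halfSpace X) μ :=
    (locallyIntegrableOn_mul isOpen_halfSpace hu hg hu_sq' hg_sq').smul (2 : ℝ)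
  have hψ : ContDiff ℝ (⊤ : ℕ∞) ψ := hχ.contDiff_sq_div_logGauge
  have hψ_supp : tsupport ψ ⊆ tsupport χ := by
    simp only [hψ_def, sq, mul_assoc]
    exact tsupport_mul_subset_left
  have hug_sq := hug.sq isOpen_halfSpace hu hg hu_sq' hg_sq'
  obtain ⟨hB, hB_zero⟩ := hug_sq.integrable_add_and_setIntegral_add_eq_zero hu_sq' hug_loc hψ
    (hχ.hasCompactSupport.of_isClosed_subset (isClosed_tsupport _) hψ_supp)
    (hψ_supp.trans hχ.tsupport_subset_halfSpace)
  have hW : IntegrableOn (fun p => (4 * C + 2) * (p.2 * u p ^ 2) + 8 * (p.2 * g p ^ 2))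
      (halfSpace X) μ := (hu_sq.const_mul (4 * C + 2)).add (hg_sq.const_mul 8)
  have hcore : MeasurableSet (cutoffCore X k) := (isCompact_cutoffCore k).measurableSet
  have hBW : IntegrableOn (fun p => 2 * (u p ^ 2 * fderiv ℝ ψ p (0, 1) + ψ p * (2 * (u p * g p)))
      + ((4 * C + 2) * (p.2 * u p ^ 2) + 8 * (p.2 * g p ^ 2))) (halfSpace X) μ :=
    (hB.integrableOn.const_mul 2).add hW
  calc ∫ p in cutoffCore X k, f p ∂μ
      = ∫ p in halfSpace X, (cutoffCore X k).indicator f p ∂μ := by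
        rw [setIntegral_indicator hcore,
          inter_eq_self_of_subset_right (cutoffCore_subset_halfSpace k)]
    _ ≤ ∫ p in halfSpace X, (2 * (u p ^ 2 * fderiv ℝ ψ p (0, 1) + ψ p * (2 * (u p * g p)))
          + ((4 * C + 2) * (p.2 * u p ^ 2) + 8 * (p.2 * g p ^ 2))) ∂μ :=
        setIntegral_mono_on (hf.integrable_indicator hcore).integrableOn
          hBW isOpen_halfSpace.measurableSet fun p hp => hχ.indicator_cutoffCore_le hC hkR hp
    _ = _ := by
        rw [integral_add (hB.integrableOn.const_mul 2) hW, integral_const_mul, hB_zero,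
          mul_zero, zero_add]

theorem integrableOn_div_mul_logGauge_sq (hu : LocallyIntegrableOn u (halfSpace X) μ)
    (hg : LocallyIntegrableOn g (halfSpace X) μ)
    (hug : HasWeakLineDerivOn μ (halfSpace X) u g (0, 1))
    (hu_sq : IntegrableOn (fun p => p.2 * u p ^ 2) (halfSpace X) μ)
    (hg_sq : IntegrableOn (fun p => p.2 * g p ^ 2) (halfSpace X) μ) :
    IntegrableOn (fun p => 1 / (p.2 * logGauge p.2 ^ 2) * u p ^ 2) (halfSpace X) μ := by
  obtain ⟨C, hC, hχ⟩ := exists_isHalfSpaceCutoff X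
  have hweight : ContinuousOn (fun p : X × ℝ => 1 / (p.2 * logGauge p.2 ^ 2)) (halfSpace X) := by
    have hL : ContinuousOn (fun p : X × ℝ => logGauge p.2) (halfSpace X) :=
      (contDiffOn_logGauge (m := 0)).continuousOn.comp continuousOn_snd fun _ hp => hp
    refine continuousOn_const.div (continuousOn_snd.mul (hL.pow 2)) fun p hp => ?_
    exact mul_ne_zero hp.ne' (pow_ne_zero 2 (one_pos.trans_le (one_le_logGauge hp)).ne')
  have hf : LocallyIntegrableOn (fun p => 1 / (p.2 * logGauge p.2 ^ 2) * u p ^ 2)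
      (halfSpace X) μ :=
    (locallyIntegrableOn_of_snd_mul hu_sq).continuousOn_mul hweight
      isOpen_halfSpace.isLocallyClosed
  have hf_core (k : ℕ) := hf.integrableOn_compact_subset (cutoffCore_subset_halfSpace k)
    (isCompact_cutoffCore k)
  have hcover : AECover (μ.restrict (halfSpace X)) atTop fun k : ℕ => cutoffCore X k :=
    ⟨ae_restrict_of_forall_mem isOpen_halfSpace.measurableSet fun p hp =>
      eventually_mem_cutoffCore hp, fun k => (isCompact_cutoffCore k).measurableSet⟩
  have hnonneg : 0 ≤ᵐ[μ.restrict (halfSpace X)] fun p => 1 / (p.2 * logGauge p.2 ^ 2) * u p ^ 2 :=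
    ae_restrict_of_forall_mem isOpen_halfSpace.measurableSet fun p (hp : 0 < p.2) => by
      simp only [Pi.zero_apply]
      positivity
  refine hcover.integrable_of_integral_bounded_of_nonneg_ae
    (∫ p in halfSpace X, ((4 * C + 2) * (p.2 * u p ^ 2) + 8 * (p.2 * g p ^ 2)) ∂μ)
    (fun k => (hf_core k).mono_measure Measure.restrict_le_self) hnonneg ?_
  filter_upwards [eventually_ge_atTop 1] with k hk
  have hk' : (1 : ℝ) ≤ k := by exact_mod_cast hk
  obtain ⟨χ, hχ⟩ := hχ k hk' k (one_pos.trans_le hk')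
  rw [Measure.restrict_restrict_of_subset (cutoffCore_subset_halfSpace _)]
  exact setIntegral_cutoffCore_le hu hg hug hu_sq hg_sq hC le_rfl hχ (hf_core k)

end Hardy

/-- The weights of the energy form: `z` in the normal direction `none`, `w z` in the tangential
directions `some i`. -/
def energyWeight {X ι : Type*} (w : ℝ → ℝ) : Option ι → X × ℝ → ℝ
  | none, p => p.2
  | some _, p => w p.2

/-- The directions in which the energy form differentiates: the unit normal `(0, 1)`, indexed by
`none`, and the tangential vectors `(b i, 0)`. -/
def energyDirection {X ι : Type*} [Zero X] (b : ι → X) : Option ι → X × ℝ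
  | none => (0, 1)
  | some i => (b i, 0)

section EnergyWeight

variable {X ι : Type*} {w : ℝ → ℝ}

theorem energyWeight_pos (hw : ∀ z > 0, 0 < w z) (j : Option ι) {p : X × ℝ} (hp : 0 < p.2) :
    0 < energyWeight w j p := by
  cases j
  exacts [hp, hw _ hp]

theorem continuousOn_energyWeight [TopologicalSpace X] (hw : ContinuousOn w (Ioi 0))
    (j : Option ι) : ContinuousOn (energyWeight w j) (halfSpace X) := by
  cases j
  exacts [continuousOn_snd, hw.comp continuousOn_snd fun _ hp => hp]

end EnergyWeight

section Cutoff

variable {X ι : Type*} [NormedAddCommGroup X] {w : ℝ → ℝ}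

theorem exists_forall_logGauge_le_imp_le_sq_mul (hw : ContinuousOn w (Ioi 0)) (k : ℝ) :
    ∃ R, k ≤ R ∧ 0 < R ∧ ∀ z > 0, logGauge z ≤ 2 * k → w z ≤ R ^ 2 * z := by
  obtain ⟨B, hB⟩ := (isCompact_setOf_logGauge_le (2 * k)).exists_bound_of_continuousOn
    (f := fun z => w z / z)
    ((hw.div continuousOn_id fun z hz => (ne_of_gt hz)).mono fun z hz => hz.1)
  refine ⟨max k (max 1 B), le_max_left _ _,
    one_pos.trans_le ((le_max_left _ _).trans (le_max_right _ _)), fun z hz hzk => ?_⟩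
  set R := max k (max 1 B)
  have hR : 1 ≤ R := (le_max_left _ _).trans (le_max_right _ _)
  have hBR : B ≤ R := (le_max_right _ _).trans (le_max_right _ _)
  rw [← div_le_iff₀ hz]
  calc w z / z ≤ B := (le_abs_self _).trans (hB z ⟨hz, hzk⟩)
    _ ≤ R ^ 2 := hBR.trans (le_self_pow₀ hR two_ne_zero)

variable [NormedSpace ℝ X]

theorem IsHalfSpaceCutoff.energyWeight_mul_sq_fderiv_le {C k R M : ℝ} {χ : X × ℝ → ℝ} {b : ι → X}
    (h : IsHalfSpaceCutoff C k R χ) (hC : 0 ≤ C) (hR : 0 < R)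
    (hwR : ∀ z > 0, logGauge z ≤ 2 * k → w z ≤ R ^ 2 * z) (hCM : C ≤ M)
    (hbM : ∀ i, C * ‖b i‖ ^ 2 ≤ M) (j : Option ι) {p : X × ℝ} (hp : 0 < p.2) :
    energyWeight w j p * fderiv ℝ χ p (energyDirection b j) ^ 2
      ≤ M * (1 / (p.2 * logGauge p.2 ^ 2) + p.2) := by
  have hL : 0 ≤ 1 / (p.2 * logGauge p.2 ^ 2) := by positivity
  have hM : 0 ≤ M := hC.trans hCM
  rcases j with _ | i
  · exact (h.mul_sq_fderiv_normal_le hp).trans (by gcongr)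
  by_cases hpχ : p ∈ tsupport χ
  · have hwp := hwR _ hp (h.tsupport_subset hpχ).2
    calc w p.2 * fderiv ℝ χ p (b i, 0) ^ 2
        ≤ R ^ 2 * p.2 * (C * ‖b i‖ ^ 2 / R ^ 2) :=
          mul_le_mul hwp (h.sq_fderiv_tangential_le _) (sq_nonneg _) (by positivity)
      _ = C * ‖b i‖ ^ 2 * p.2 := by field_simp
      _ ≤ M * (1 / (p.2 * logGauge p.2 ^ 2) + p.2) :=
          mul_le_mul (hbM i) (le_add_of_nonneg_left hL) hp.le hM
  · rw [image_eq_zero_of_notMem_tsupport fun hp' => hpχ (tsupport_fderiv_subset ℝ hp')]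
    simp only [zero_apply, ne_eq, OfNat.ofNat_ne_zero, not_false_eq_true,
      zero_pow, mul_zero]
    positivity

theorem IsHalfSpaceCutoff.eventuallyEq_one {C k R : ℝ} {χ : X × ℝ → ℝ} {p : X × ℝ}
    (h : IsHalfSpaceCutoff C k R χ) (hpR : ‖p.1‖ < R) (hp : 0 < p.2) (hpk : logGauge p.2 < k) :
    χ =ᶠ[𝓝 p] 1 := by
  have hL : ContinuousAt (fun q : X × ℝ => logGauge q.2) p :=
    (hasDerivAt_logGauge hp.ne').continuousAt.comp continuousAt_snd
  filter_upwards [continuous_fst.norm.continuousAt.eventually_lt_const hpR,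
    continuous_snd.continuousAt.eventually_const_lt hp, hL.eventually_lt_const hpk]
    with q hqR hq hqk using h.eq_one hqR.le hq hqk.le

theorem exists_seq_cutoff [FiniteDimensional ℝ X] [Finite ι] (hw : ContinuousOn w (Ioi 0))
    (b : ι → X) :
    ∃ (M : ℝ) (χ : ℕ → X × ℝ → ℝ),
      (∀ k, ContDiff ℝ (⊤ : ℕ∞) (χ k) ∧ HasCompactSupport (χ k) ∧ tsupport (χ k) ⊆ halfSpace X ∧
        (∀ p, χ k p ∈ Icc 0 1) ∧ ∀ j, ∀ p ∈ halfSpace X,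
          energyWeight w j p * fderiv ℝ (χ k) p (energyDirection b j) ^ 2
            ≤ M * (1 / (p.2 * logGauge p.2 ^ 2) + p.2)) ∧
      ∀ p ∈ halfSpace X, ∀ᶠ k in atTop, χ k =ᶠ[𝓝 p] 1 := by
  obtain ⟨C, hC, hχ⟩ := exists_isHalfSpaceCutoff X
  obtain ⟨B, hB⟩ := (finite_range fun i => C * ‖b i‖ ^ 2).bddAbove
  choose R hkR hR hwR using fun k : ℕ => exists_forall_logGauge_le_imp_le_sq_mul hw (k + 1)
  choose χ hχ using fun k : ℕ => hχ (k + 1) (by simp) (R k) (hR k)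
  refine ⟨max C B, χ, fun k => ⟨(hχ k).contDiff, (hχ k).hasCompactSupport,
    (hχ k).tsupport_subset_halfSpace, (hχ k).mem_Icc, fun j p hp =>
    (hχ k).energyWeight_mul_sq_fderiv_le hC (hR k) (hwR k) (le_max_left _ _)
      (fun i => (hB (mem_range_self i)).trans (le_max_right _ _)) j hp⟩, fun p hp => ?_⟩
  filter_upwards [eventually_mem_cutoffCore hp] with k hk
  exact (hχ k).eventuallyEq_one
    ((mem_closedBall_zero_iff.1 hk.1).trans_lt ((lt_add_one _).trans_le (hkR k))) hp
    (hk.2.2.trans_lt (lt_add_one _))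

end Cutoff

section CutoffApproximation

variable {X ι : Type*} [NormedAddCommGroup X] [NormedSpace ℝ X] [FiniteDimensional ℝ X]
  [MeasurableSpace X] [BorelSpace X] [Fintype ι] {μ : Measure (X × ℝ)} {w : ℝ → ℝ}
  {φ : X × ℝ → ℝ} {g : Option ι → X × ℝ → ℝ} {ε : ℝ}

theorem exists_cutoff_setIntegral_sobolevDensity_sub_lt (hw : ContinuousOn w (Ioi 0))
    (hw₀ : ∀ z > 0, 0 < w z) (b : ι → X) (hφ : LocallyIntegrableOn φ (halfSpace X) μ)
    (hg : ∀ j, LocallyIntegrableOn (g j) (halfSpace X) μ)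
    (hφ_sq : IntegrableOn (fun p => p.2 * φ p ^ 2) (halfSpace X) μ)
    (hφ_hardy : IntegrableOn (fun p => 1 / (p.2 * logGauge p.2 ^ 2) * φ p ^ 2) (halfSpace X) μ)
    (hφg : IntegrableOn (sobolevDensity Prod.snd (energyWeight w) φ g) (halfSpace X) μ)
    (hε : 0 < ε) :
    ∃ χ : X × ℝ → ℝ, ContDiff ℝ (⊤ : ℕ∞) χ ∧ HasCompactSupport χ ∧ tsupport χ ⊆ halfSpace X ∧
      IntegrableOn (sobolevDensity Prod.snd (energyWeight w) (φ - χ * φ) fun j => g j -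
        (χ * g j + (fun p => fderiv ℝ χ p (energyDirection b j)) * φ)) (halfSpace X) μ ∧
      ∫ p in halfSpace X, sobolevDensity Prod.snd (energyWeight w) (φ - χ * φ) (fun j => g j -
        (χ * g j + (fun p => fderiv ℝ χ p (energyDirection b j)) * φ)) p ∂μ < ε := by
  obtain ⟨M, χ, hχ, hχ_one⟩ := exists_seq_cutoff hw b
  have hΩ : MeasurableSet (halfSpace X) := isOpen_halfSpace.measurableSet
  set e : ℕ → X × ℝ → ℝ := fun k => sobolevDensity Prod.snd (energyWeight w) (φ - χ k * φ)
    fun j => g j - (χ k * g j + (fun p => fderiv ℝ (χ k) p (energyDirection b j)) * φ)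
  set bound : X × ℝ → ℝ := fun p => 2 * (sobolevDensity Prod.snd (energyWeight w) φ g p
    + Fintype.card (Option ι) * (M * (1 / (p.2 * logGauge p.2 ^ 2) + p.2) * φ p ^ 2))
  have hbound : IntegrableOn bound (halfSpace X) μ := by
    refine ((hφg.add (((hφ_hardy.add hφ_sq).const_mul M).const_mul
      (Fintype.card (Option ι) : ℝ))).const_mul 2).congr
      (.of_forall fun p => ?_)
    simp only [bound, Pi.add_apply]
    ring
  have he_meas (k : ℕ) : AEStronglyMeasurable (e k) (μ.restrict (halfSpace X)) :=
    aestronglyMeasurable_sobolevDensity_sub_cutoff continuous_snd.aestronglyMeasurable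
      (fun j => (continuousOn_energyWeight hw j).aestronglyMeasurable hΩ) hφ.aestronglyMeasurable
      (fun j => (hg j).aestronglyMeasurable) (hχ k).1.continuous.aestronglyMeasurable fun j =>
        (((hχ k).1.continuous_fderiv (by simp)).clm_apply continuous_const).aestronglyMeasurable
  have he_le (k : ℕ) : ∀ᵐ p ∂μ.restrict (halfSpace X), ‖e k p‖ ≤ bound p := by
    refine ae_restrict_of_forall_mem hΩ fun p (hp : 0 < p.2) => ?_
    obtain ⟨-, -, -, hχ_mem, hχ'⟩ := hχ k
    have hω (j : Option ι) := (energyWeight_pos hw₀ j hp).le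
    rw [Real.norm_of_nonneg (sobolevDensity_nonneg hp.le hω)]
    exact sobolevDensity_sub_cutoff_le hp.le hω (hχ_mem p) fun j => hχ' j p hp
  have he_lim : ∀ᵐ p ∂μ.restrict (halfSpace X), Tendsto (fun k => e k p) atTop (𝓝 0) := by
    refine ae_restrict_of_forall_mem hΩ fun p hp => tendsto_const_nhds.congr' ?_
    filter_upwards [hχ_one p hp] with k hk
    simp [e, sobolevDensity, hk.eq_of_nhds, hk.fderiv_eq]
  have hlim := tendsto_integral_of_dominated_convergence bound he_meas hbound he_le he_lim
  rw [integral_zero] at hlim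
  obtain ⟨k, hk⟩ := (hlim.eventually_lt_const hε).exists
  obtain ⟨hχ_smooth, hχ_supp, hχΩ, -⟩ := hχ k
  exact ⟨χ k, hχ_smooth, hχ_supp, hχΩ, hbound.mono' (he_meas k) (he_le k), hk⟩

end CutoffApproximation

section Density

variable {X ι : Type*} [NormedAddCommGroup X] [NormedSpace ℝ X] [FiniteDimensional ℝ X]
  [MeasurableSpace X] [BorelSpace X] [Fintype ι] {μ : Measure (X × ℝ)} {w : ℝ → ℝ} {b : ι → X}
  {φ : X × ℝ → ℝ} {ε : ℝ}

theorem integrableOn_of_sobolevDensity_energyWeight {g : Option ι → X × ℝ → ℝ}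
    (hw : ContinuousOn w (Ioi 0)) (hw₀ : ∀ z > 0, 0 < w z)
    (hφ : LocallyIntegrableOn φ (halfSpace X) μ)
    (hg : ∀ j, LocallyIntegrableOn (g j) (halfSpace X) μ)
    (h : IntegrableOn (sobolevDensity Prod.snd (energyWeight w) φ g) (halfSpace X) μ) :
    IntegrableOn (fun p => p.2 * φ p ^ 2) (halfSpace X) μ ∧
      ∀ j, IntegrableOn (fun p => energyWeight w j p * g j p ^ 2) (halfSpace X) μ := by
  have hΩ : MeasurableSet (halfSpace X) := isOpen_halfSpace.measurableSet
  have hterm {p : X × ℝ} (hp : 0 < p.2) (j : Option ι) : 0 ≤ energyWeight w j p * g j p ^ 2 :=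
    mul_nonneg (energyWeight_pos hw₀ j hp).le (sq_nonneg _)
  have hφ_term {p : X × ℝ} (hp : 0 < p.2) : 0 ≤ p.2 * φ p ^ 2 := mul_nonneg hp.le (sq_nonneg _)
  refine ⟨h.mono' (continuous_snd.aestronglyMeasurable.mul (hφ.aestronglyMeasurable.pow 2))
    (ae_restrict_of_forall_mem hΩ fun p (hp : 0 < p.2) => ?_), fun j => h.mono'
    (((continuousOn_energyWeight hw j).aestronglyMeasurable hΩ).mul
      ((hg j).aestronglyMeasurable.pow 2))
    (ae_restrict_of_forall_mem hΩ fun p (hp : 0 < p.2) => ?_)⟩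
  · rw [Real.norm_of_nonneg (hφ_term hp)]
    exact le_add_of_nonneg_right (Finset.sum_nonneg fun j _ => hterm hp j)
  · rw [Real.norm_of_nonneg (hterm hp j)]
    exact le_add_of_nonneg_of_le (hφ_term hp)
      (Finset.single_le_sum (fun j _ => hterm hp j) (Finset.mem_univ j))

variable [μ.IsAddHaarMeasure]

theorem exists_contDiff_setIntegral_sobolevDensity_energyWeight_lt {g : Option ι → X × ℝ → ℝ}
    (hw : ContinuousOn w (Ioi 0)) (hw₀ : ∀ z > 0, 0 < w z)
    (hφ : LocallyIntegrableOn φ (halfSpace X) μ)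
    (hg : ∀ j, LocallyIntegrableOn (g j) (halfSpace X) μ)
    (hφg : ∀ j, HasWeakLineDerivOn μ (halfSpace X) φ (g j) (energyDirection b j))
    (hφg_int : IntegrableOn (sobolevDensity Prod.snd (energyWeight w) φ g) (halfSpace X) μ)
    (hε : 0 < ε) :
    ∃ ψ : X × ℝ → ℝ, ContDiff ℝ (⊤ : ℕ∞) ψ ∧ HasCompactSupport ψ ∧ tsupport ψ ⊆ halfSpace X ∧
      ∫ p in halfSpace X, sobolevDensity Prod.snd (energyWeight w) (φ - ψ)
        (fun j => g j - fun p => fderiv ℝ ψ p (energyDirection b j)) p ∂μ < ε := by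
  obtain ⟨hφ_sq, hg_sq⟩ := integrableOn_of_sobolevDensity_energyWeight hw hw₀ hφ hg hφg_int
  obtain ⟨χ, hχ, hχ_supp, hχΩ, hcut, hcut_lt⟩ := exists_cutoff_setIntegral_sobolevDensity_sub_lt
    hw hw₀ b hφ hg hφ_sq
    (integrableOn_div_mul_logGauge_sq hφ (hg none) (hφg none) hφ_sq (hg_sq none)) hφg_int
    (by positivity : 0 < ε / 4)
  obtain ⟨ψ, hψ, hψ_supp, hψΩ, hmol, hmol_lt⟩ :=
    exists_contDiff_setIntegral_sobolevDensity_mul_sub_lt isOpen_halfSpace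
      continuousOn_snd (continuousOn_energyWeight hw) hφ (locallyIntegrableOn_of_snd_mul hφ_sq) hg
      (fun j => locallyIntegrableOn_of_mul isOpen_halfSpace (continuousOn_energyWeight hw j)
        (fun p hp => (energyWeight_pos hw₀ j hp).ne') (hg_sq j).locallyIntegrableOn)
      hφg hχ hχ_supp hχΩ (by positivity : 0 < ε / 4)
  refine ⟨ψ, hψ, hψ_supp, hψΩ, ?_⟩
  have hadd := setIntegral_sobolevDensity_add_le isOpen_halfSpace.measurableSet
    (fun p (hp : 0 < p.2) => hp.le) (fun p hp j => (energyWeight_pos hw₀ j hp).le) hcut hmol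
  have hgψ : (fun j => g j - (χ * g j + (fun p => fderiv ℝ χ p (energyDirection b j)) * φ))
      + (fun j => χ * g j + (fun p => fderiv ℝ χ p (energyDirection b j)) * φ
        - fun p => fderiv ℝ ψ p (energyDirection b j))
      = fun j => g j - fun p => fderiv ℝ ψ p (energyDirection b j) :=
    funext fun j => sub_add_sub_cancel _ _ _
  rw [sub_add_sub_cancel, hgψ] at hadd
  linarith

theorem stmt1_general {g₀ : X × ℝ → ℝ} {g : ι → X × ℝ → ℝ}
    (hw : ContinuousOn w (Ioi 0)) (hw₀ : ∀ z > 0, 0 < w z)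
    (hφ : LocallyIntegrableOn φ (halfSpace X) μ)
    (hg₀ : LocallyIntegrableOn g₀ (halfSpace X) μ)
    (hg : ∀ i, LocallyIntegrableOn (g i) (halfSpace X) μ)
    (hφg₀ : HasWeakLineDerivOn μ (halfSpace X) φ g₀ (0, 1))
    (hφg : ∀ i, HasWeakLineDerivOn μ (halfSpace X) φ (g i) (b i, 0))
    (hφ_sq : IntegrableOn (fun p => φ p ^ 2 * p.2) (halfSpace X) μ)
    (hg_sq : IntegrableOn (fun p => p.2 * g₀ p ^ 2 + w p.2 * ∑ i, g i p ^ 2) (halfSpace X) μ)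
    (hε : 0 < ε) :
    ∃ ψ : X × ℝ → ℝ, ContDiff ℝ (⊤ : ℕ∞) ψ ∧ HasCompactSupport ψ ∧ tsupport ψ ⊆ halfSpace X ∧
      ∫ p in halfSpace X, ((φ p - ψ p) ^ 2 * p.2 + (p.2 * (g₀ p - fderiv ℝ ψ p (0, 1)) ^ 2
        + w p.2 * ∑ i, (g i p - fderiv ℝ ψ p (b i, 0)) ^ 2)) ∂μ < ε := by
  have hdensity (u h₀ : X × ℝ → ℝ) (h : ι → X × ℝ → ℝ) (p : X × ℝ) :
      sobolevDensity Prod.snd (energyWeight w) u (fun j => j.elim h₀ h) p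
        = u p ^ 2 * p.2 + (p.2 * h₀ p ^ 2 + w p.2 * ∑ i, h i p ^ 2) := by
    simp only [sobolevDensity, energyWeight, Fintype.sum_option, Finset.mul_sum, Option.elim,
      mul_comm p.2 (u p ^ 2)]
  obtain ⟨ψ, hψ, hψ_supp, hψΩ, hψ_lt⟩ :=
    exists_contDiff_setIntegral_sobolevDensity_energyWeight_lt (b := b)
      (g := fun j => j.elim g₀ g) hw hw₀ hφ (Option.forall.2 ⟨hg₀, hg⟩)
      (Option.forall.2 ⟨hφg₀, hφg⟩)
      ((hφ_sq.add hg_sq).congr (.of_forall fun p => (hdensity φ g₀ g p).symm)) hε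
  refine ⟨ψ, hψ, hψ_supp, hψΩ, lt_of_eq_of_lt (integral_congr_ae (.of_forall fun p => ?_)) hψ_lt⟩
  simp [sobolevDensity, energyWeight, energyDirection, Finset.mul_sum, mul_comm p.2]

end Density

/-- Density of `C₀^∞(Ω)` in the energy space `E` for Taub's spacetime (`n ≥ 2`):
every `φ ∈ E`, i.e. `φ ∈ L²(Ω, z dμ) ∩ H¹_loc(Ω)` with finite energy `b(φ,φ) < ∞`,
can be approximated in the energy norm
`‖φ‖_E² = b(φ,φ) + ‖φ‖_H²` by smooth functions compactly supported in the open set `Ω`. -/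
theorem stmt1 (n : ℕ) (hn : 2 ≤ n)
    (φ : EuclideanSpace ℝ (Fin n) × ℝ → ℝ)
    (G : EuclideanSpace ℝ (Fin n) × ℝ → EuclideanSpace ℝ (Fin n) × ℝ → ℝ)
    (hweak : IsWeakFDerivOn n φ G)
    (hH : IntegrableOn (fun p => φ p ^ 2 * p.2) {p | 0 < p.2})
    (hE : IntegrableOn (energyDensity n G) {p | 0 < p.2}) :
    ∀ ε > (0 : ℝ), ∃ ψ : EuclideanSpace ℝ (Fin n) × ℝ → ℝ,
      ContDiff ℝ (⊤ : ℕ∞) ψ ∧ HasCompactSupport ψ ∧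
      tsupport ψ ⊆ {p : EuclideanSpace ℝ (Fin n) × ℝ | 0 < p.2} ∧
      (∫ p in {p : EuclideanSpace ℝ (Fin n) × ℝ | 0 < p.2},
          ((φ p - ψ p) ^ 2 * p.2 +
            energyDensity n (fun p v => G p v - fderiv ℝ ψ p v) p)) < ε := by
  obtain ⟨hφ, hG, hparts⟩ := hweak
  have : (volume : Measure (EuclideanSpace ℝ (Fin n) × ℝ)).IsAddHaarMeasure :=
    Measure.prod.instIsAddHaarMeasure volume volume
  intro ε hε
  exact stmt1_general (b := fun i => EuclideanSpace.single i 1) (w := fun z => z ^ (-(1 : ℝ) / n))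
    (continuousOn_id.rpow_const fun z hz => .inl (ne_of_gt hz))
    (fun z hz => Real.rpow_pos_of_pos hz _) hφ (hG _) (fun _ => hG _)
    (fun ψ h h' h'' => hparts ψ h h' h'' _) (fun _ ψ h h' h'' => hparts ψ h h' h'' _) hH hE hε
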